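/- arXiv:1706.02951 — 2 statements merged into one kernel-verified Lean document; each statement's English description precedes it below -/
import Mathlib

section
/- Let X be a complex Banach space with dim X > 2 and let 𝒩 be a non-trivial nest on X with X_- ⊊ X. Then for every n ≥ 2 and every Lie n-derivation L : Alg 𝒩 → B(X) there exist a derivation D : Alg 𝒩 → B(X) and a linear map H : Alg 𝒩 → ℂI vanishing on every (n−1)-th commutator p_n(A_1,…,A_n) with A_1,…,A_n ∈ Alg 𝒩 such that L = D + H; moreover, if L is continuous then D and H can be chosen continuous. -/
open scoped Classical

set_option synthInstance.maxHeartbeats 1000000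
set_option maxHeartbeats 1000000

noncomputable section

/-- The `(n-1)`-th commutator polynomial `p_n(x_1, …, x_n)`, defined recursively by
`p_1(x_1) = x_1` and `p_k(x_1, …, x_k) = [p_{k-1}(x_1, …, x_{k-1}), x_k]`. -/
def commPoly {A : Type*} [NonUnitalNonAssocRing A] : (n : ℕ) → (Fin n → A) → A
  | 0, _ => 0
  | 1, a => a 0
  | n + 2, a =>
      commPoly (n + 1) (fun i => a i.castSucc) * a (Fin.last (n + 1)) -
        a (Fin.last (n + 1)) * commPoly (n + 1) (fun i => a i.castSucc)

/-- A nest of closed subspaces of `X`: it contains `{0}` and `X`, is totally ordered by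
inclusion, is closed under arbitrary intersections, and contains the norm-closed linear
span of the union of any subfamily. -/
structure IsNest {X : Type*} [NormedAddCommGroup X] [NormedSpace ℂ X]
    (𝒩 : Set (Submodule ℂ X)) : Prop where
  closed : ∀ N ∈ 𝒩, IsClosed (N : Set X)
  bot_mem : (⊥ : Submodule ℂ X) ∈ 𝒩
  top_mem : (⊤ : Submodule ℂ X) ∈ 𝒩
  total : ∀ N₁ ∈ 𝒩, ∀ N₂ ∈ 𝒩, N₁ ≤ N₂ ∨ N₂ ≤ N₁
  sInf_mem : ∀ S ⊆ 𝒩, sInf S ∈ 𝒩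
  closure_sSup_mem : ∀ S ⊆ 𝒩, (sSup S).topologicalClosure ∈ 𝒩

/-- The nest algebra `Alg 𝒩` of all bounded operators leaving every member of `𝒩`
invariant. -/
def nestAlgebra {X : Type*} [NormedAddCommGroup X] [NormedSpace ℂ X]
    (𝒩 : Set (Submodule ℂ X)) : Subalgebra ℂ (X →L[ℂ] X) where
  carrier := {T : X →L[ℂ] X | ∀ N ∈ 𝒩, ∀ x ∈ N, T x ∈ N}
  mul_mem' := fun {a b} ha hb N hN x hx => ha N hN _ (hb N hN x hx)
  one_mem' := fun N _ x hx => hx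
  add_mem' := fun {a b} ha hb N hN x hx => N.add_mem (ha N hN x hx) (hb N hN x hx)
  zero_mem' := fun N _ _ _ => N.zero_mem
  algebraMap_mem' := fun r N hN x hx => by
    simpa [Algebra.algebraMap_eq_smul_one] using N.smul_mem r hx

/-- `X₋` : the norm-closed linear span of the union of all members of `𝒩` different
from `X`. -/
def nestXminus {X : Type*} [NormedAddCommGroup X] [NormedSpace ℂ X]
    (𝒩 : Set (Submodule ℂ X)) : Submodule ℂ X :=
  (sSup {N | N ∈ 𝒩 ∧ N ≠ (⊤ : Submodule ℂ X)}).topologicalClosure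

/-- `L` is a Lie `n`-derivation on the subalgebra `𝒜` of `B`:
`L(p_n(a_1,…,a_n)) = ∑_k p_n(a_1, …, a_{k-1}, L(a_k), a_{k+1}, …, a_n)`. -/
def IsLieNDeriv {B : Type*} [Ring B] [Algebra ℂ B] (𝒜 : Subalgebra ℂ B)
    (n : ℕ) (L : ↥𝒜 →ₗ[ℂ] B) : Prop :=
  ∀ a : Fin n → ↥𝒜,
    L (commPoly n a) =
      ∑ k : Fin n, commPoly n (Function.update (fun i => ((a i : B))) k (L (a k)))

/-- `D` is an (associative) derivation on the subalgebra `𝒜` of `B`. -/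
def IsDerivOn {B : Type*} [Ring B] [Algebra ℂ B] (𝒜 : Subalgebra ℂ B)
    (D : ↥𝒜 →ₗ[ℂ] B) : Prop :=
  ∀ a b : ↥𝒜, D (a * b) = D a * (b : B) + (a : B) * D b

/-- The left-normed iterated Lie bracket `⁅…⁅⁅a 0, a 1⁆, a 2⁆, …, a m⁆` of a sequence. -/
def iterLie {R : Type*} [Ring R] (a : ℕ → R) : ℕ → R
  | 0 => a 0
  | m + 1 => ⁅iterLie a m, a (m + 1)⁆

/-- The first-order variation of `iterLie b` in the direction `b'`. -/
def iterLieVar {R : Type*} [Ring R] (b b' : ℕ → R) : ℕ → R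
  | 0 => b' 0
  | m + 1 => ⁅iterLieVar b b' m, b (m + 1)⁆ + ⁅iterLie b m, b' (m + 1)⁆

section IteratedBracket

variable {R S : Type*} [Ring R] [Ring S]

lemma commPoly_eq_iterLie (a : ℕ → R) (m : ℕ) :
    commPoly (m + 1) (fun i : Fin (m + 1) => a i) = iterLie a m := by
  induction m with
  | zero => rfl
  | succ m ih =>
    rw [commPoly, iterLie, Ring.lie_def, ← ih]
    simp

lemma sum_commPoly_update_eq_iterLieVar (b b' : ℕ → R) (m : ℕ) :
    ∑ k : Fin (m + 1), commPoly (m + 1) (Function.update (fun i : Fin (m + 1) => b i) k (b' k)) =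
      iterLieVar b b' m := by
  induction m with
  | zero => simp [commPoly, iterLieVar]
  | succ m ih =>
    have h_init (k : Fin (m + 1)) (v : R) :
        (fun i : Fin (m + 1) =>
          Function.update (fun i : Fin (m + 2) => b i) k.castSucc v i.castSucc) =
          Function.update (fun i : Fin (m + 1) => b i) k v := by
      funext i
      by_cases h : i = k
      · subst h; simp
      · simp [Function.update_of_ne, h]
    rw [Fin.sum_univ_castSucc, iterLieVar, ← ih, ← commPoly_eq_iterLie]
    simp only [commPoly, h_init, Ring.lie_def, Finset.sum_mul, Finset.mul_sum,
      Finset.sum_sub_distrib]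
    congr 1
    · simp [Function.update_of_ne, (Fin.castSucc_ne_last _).symm]
    · simp [Function.update_of_ne, Fin.castSucc_ne_last]

lemma map_iterLie (φ : R →+* S) (a : ℕ → R) (m : ℕ) :
    φ (iterLie a m) = iterLie (fun i => φ (a i)) m := by
  induction m with
  | zero => rfl
  | succ m ih => simp [iterLie, Ring.lie_def, ih]

lemma map_iterLieVar (φ : R →+* S) (b b' : ℕ → R) (m : ℕ) :
    φ (iterLieVar b b' m) = iterLieVar (fun i => φ (b i)) (fun i => φ (b' i)) m := by
  induction m with
  | zero => rfl
  | succ m ih => simp [iterLieVar, Ring.lie_def, ih, map_iterLie]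

lemma iterLieVar_sub (b b' b'' : ℕ → R) (m : ℕ) :
    iterLieVar b (fun i => b' i - b'' i) m = iterLieVar b b' m - iterLieVar b b'' m := by
  induction m with
  | zero => rfl
  | succ m ih => simp only [iterLieVar, ih, Ring.lie_def]; noncomm_ring

lemma iterLieVar_inner (t : R) (b : ℕ → R) (m : ℕ) :
    iterLieVar b (fun i => ⁅t, b i⁆) m = ⁅t, iterLie b m⁆ := by
  induction m with
  | zero => rfl
  | succ m ih => rw [iterLieVar, ih]; simp only [iterLie, Ring.lie_def]; noncomm_ring

lemma iterLieVar_succ_eq_zero (b b' : ℕ → R) (h : ∀ (i : ℕ) (z : R), ⁅z, b' i⁆ = 0) (m : ℕ) :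
    iterLieVar b b' (m + 1) = 0 := by
  induction m with
  | zero =>
    have := h 0 (b 1)
    rw [Ring.lie_def] at this
    rw [iterLieVar, h, add_zero, iterLieVar, Ring.lie_def, ← neg_sub, this, neg_zero]
  | succ m ih => rw [iterLieVar, ih, h]; simp [Ring.lie_def]

lemma iterLie_add (a : ℕ → R) (m k : ℕ) :
    iterLie a (m + k) = iterLie (fun i => if i = 0 then iterLie a m else a (m + i)) k := by
  induction k with
  | zero => simp [iterLie]
  | succ k ih => simp [← add_assoc, iterLie, ih]

lemma iterLieVar_add (b b' : ℕ → R) (m k : ℕ) :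
    iterLieVar b b' (m + k) =
      iterLieVar (fun i => if i = 0 then iterLie b m else b (m + i))
        (fun i => if i = 0 then iterLieVar b b' m else b' (m + i)) k := by
  induction k with
  | zero => simp [iterLieVar]
  | succ k ih => simp [← add_assoc, iterLieVar, ih, iterLie_add]

lemma iterLie_add_eq_iterate (a : ℕ → R) (p : R) (j k : ℕ)
    (h : ∀ i, j < i → i ≤ j + k → a i = p) :
    iterLie a (j + k) = (fun d => ⁅d, p⁆)^[k] (iterLie a j) := by
  induction k with
  | zero => rfl
  | succ k ih =>
    rw [Function.iterate_succ_apply', ← ih fun i hi hi' => h i hi (by omega), ← add_assoc, iterLie,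
      h _ (by omega) (by omega)]

lemma iterLieVar_add_eq_iterate (b b' : ℕ → R) (p : R) (j k : ℕ)
    (h : ∀ i, j < i → i ≤ j + k → b i = p)
    (h' : ∀ i, j < i → i ≤ j + k → ∀ z : R, ⁅z, b' i⁆ = 0) :
    iterLieVar b b' (j + k) = (fun d => ⁅d, p⁆)^[k] (iterLieVar b b' j) := by
  induction k with
  | zero => rfl
  | succ k ih =>
    rw [Function.iterate_succ_apply',
      ← ih (fun i hi hi' => h i hi (by omega)) (fun i hi hi' => h' i hi (by omega)), ← add_assoc,
      iterLieVar, h _ (by omega) (by omega), h' _ (by omega) (by omega), add_zero]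

lemma iterate_lie_idempotent_odd {p : R} (hp : p * p = p) (d : R) (k : ℕ) :
    (fun d => ⁅d, p⁆)^[2 * k + 1] d = ⁅d, p⁆ := by
  induction k with
  | zero => rfl
  | succ k ih =>
    rw [show 2 * (k + 1) + 1 = (2 * k + 1) + 1 + 1 by ring, Function.iterate_succ_apply',
      Function.iterate_succ_apply', ih]
    have hp' (z : R) : p * (p * z) = p * z := by rw [← mul_assoc, hp]
    simp only [Ring.lie_def, sub_mul, mul_sub, mul_assoc, hp, hp']
    abel

lemma iterate_lie_idempotent_even {p : R} (hp : p * p = p) (d : R) (k : ℕ) :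
    (fun d => ⁅d, p⁆)^[2 * k + 2] d = ⁅⁅d, p⁆, p⁆ := by
  rw [Function.iterate_succ_apply', iterate_lie_idempotent_odd hp]

/-- `K` is a Lie `(m + 1)`-derivation from `R` into `S`, seen as a bimodule through `φ`. -/
def IsIterLieDeriv (φ : R →+* S) (m : ℕ) (K : R → S) : Prop :=
  ∀ a : ℕ → R, K (iterLie a m) = iterLieVar (fun i => φ (a i)) (fun i => K (a i)) m

lemma IsIterLieDeriv.add_self {φ : R →+* S} {m : ℕ} {K : R → S} (h : IsIterLieDeriv φ m K) :
    IsIterLieDeriv φ (m + m) K := by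
  intro a
  rw [iterLie_add, h, iterLieVar_add]
  congr 1
  · funext i; split_ifs <;> simp [map_iterLie]
  · funext i; split_ifs <;> simp [h a]

section Idempotent

variable {φ : R →+* S} {m : ℕ} {K : R → S} {p : R}

lemma IsIterLieDeriv.map_lie_lie (h : IsIterLieDeriv φ (2 * m + 2) K) (hp : p * p = p)
    (hKp : ∀ z : S, ⁅z, K p⁆ = 0) (a : R) :
    K ⁅⁅a, p⁆, p⁆ = ⁅⁅K a, φ p⁆, φ p⁆ := by
  have hp' : φ p * φ p = φ p := by rw [← map_mul, hp]
  have key := h fun i => if i = 0 then a else p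
  rw [← zero_add (2 * m + 2), iterLie_add_eq_iterate _ p, iterLieVar_add_eq_iterate _ _ (φ p),
    iterate_lie_idempotent_even hp, iterate_lie_idempotent_even hp'] at key
  · simpa [iterLie, iterLieVar] using key
  · intro i hi _; simp [hi.ne']
  · intro i hi _; simp [hi.ne', hKp]
  · intro i hi _; simp [hi.ne']

lemma IsIterLieDeriv.map_lie_lie_self (h : IsIterLieDeriv φ (2 * m + 2) K) (hp : p * p = p)
    (hKp : ∀ z : S, ⁅z, K p⁆ = 0) (a : R) :
    K ⁅⁅a, p⁆, a⁆ = ⁅⁅K a, φ p⁆, φ a⁆ + ⁅φ ⁅a, p⁆, K a⁆ := by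
  have hp' : φ p * φ p = φ p := by rw [← map_mul, hp]
  have key := h fun i => if i = 0 ∨ i = 2 * m + 2 then a else p
  rw [iterLie, iterLieVar, ← map_iterLie, ← zero_add (2 * m + 1), iterLie_add_eq_iterate _ p,
    iterLieVar_add_eq_iterate _ _ (φ p), iterate_lie_idempotent_odd hp,
    iterate_lie_idempotent_odd hp'] at key
  · simpa [iterLie, iterLieVar] using key
  · intro i hi _; rw [if_neg (by omega)]
  · intro i hi _; rw [if_neg (by omega)]; exact hKp
  · intro i hi _; rw [if_neg (by omega)]

lemma IsIterLieDeriv.map_lie_lie_idempotent (h : IsIterLieDeriv φ (2 * m + 2) K) (hp : p * p = p)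
    (hKp : ∀ z : S, ⁅z, K p⁆ = 0) (a b : R) :
    K ⁅⁅a, b⁆, p⁆ = ⁅⁅K a, φ b⁆ + ⁅φ a, K b⁆, φ p⁆ := by
  have hp' : φ p * φ p = φ p := by rw [← map_mul, hp]
  have key := h fun i => if i = 0 then a else if i = 1 then b else p
  rw [show 2 * m + 2 = 1 + (2 * m + 1) by ring, iterLie_add_eq_iterate _ p,
    iterLieVar_add_eq_iterate _ _ (φ p), iterate_lie_idempotent_odd hp,
    iterate_lie_idempotent_odd hp'] at key
  · simpa [iterLie, iterLieVar] using key
  · intro i hi _; rw [if_neg (by omega), if_neg (by omega)]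
  · intro i hi _; rw [if_neg (by omega), if_neg (by omega)]; exact hKp
  · intro i hi _; rw [if_neg (by omega), if_neg (by omega)]

lemma IsIterLieDeriv.map_lie_lie_of_fixed (h : IsIterLieDeriv φ (2 * m + 2) K)
    (hKp : ∀ z : S, ⁅z, K p⁆ = 0) (a b : R) (hb : K b = 0) (hab : ⁅⁅⁅a, b⁆, b⁆, p⁆ = ⁅⁅a, b⁆, b⁆)
    (hKab : ⁅⁅⁅K a, φ b⁆, φ b⁆, φ p⁆ = ⁅⁅K a, φ b⁆, φ b⁆) :
    K ⁅⁅a, b⁆, b⁆ = ⁅⁅K a, φ b⁆, φ b⁆ := by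
  have key := h fun i => if i = 0 then a else if i ≤ 2 then b else p
  rw [show 2 * m + 2 = 2 + 2 * m by ring, iterLie_add_eq_iterate _ p,
    iterLieVar_add_eq_iterate _ _ (φ p)] at key
  · simp only [iterLie, iterLieVar] at key
    have lie_zero' (z : S) : ⁅z, (0 : S)⁆ = 0 := by simp [Ring.lie_def]
    norm_num [hb, lie_zero'] at key
    rwa [Function.iterate_fixed hab, Function.iterate_fixed hKab] at key
  · intro i hi _; rw [if_neg (by omega), if_neg (by omega)]
  · intro i hi _; rw [if_neg (by omega), if_neg (by omega)]; exact hKp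
  · intro i hi _; rw [if_neg (by omega), if_neg (by omega)]

end Idempotent

end IteratedBracket

section RankOne

variable {X R : Type*} [AddCommGroup X] [Module ℂ X] [Ring R] {φ : R →+* Module.End ℂ X}
  {f : X →ₗ[ℂ] ℂ} {u : X} {r : X → R} {K : R →+ Module.End ℂ X}

lemma IsIterLieDeriv.apply_rankOne_eq_smul {m : ℕ} (h : IsIterLieDeriv φ (m + 1) K)
    (hφ : Function.Injective φ) (hr : ∀ x z, φ (r x) z = f z • x) (hu : f u = 1)
    (hK : ∀ x, f x = 0 → K (r x) u = 0) {c : ℂ} (hc : K (r u) u = c • u) (z : X) :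
    K (r u) z = c • z := by
  have hker (x : X) (hx : f x = 0) : K (r u) x = c • x := by
    have hfix : ⁅r x, r u⁆ = r x := hφ <| LinearMap.ext fun z => by
      simp [Ring.lie_def, hr, hu, hx]
    have key := h fun i => if i = 0 then r x else r u
    have hiter (k : ℕ) : iterLie (fun i => if i = 0 then r x else r u) k = r x := by
      induction k with
      | zero => rfl
      | succ k ih => simp [iterLie, ih, hfix]
    set d := iterLieVar (fun i => φ (if i = 0 then r x else r u))
      (fun i => K (if i = 0 then r x else r u)) with hd
    have hstep (k : ℕ) : d (k + 1) u = d k u - f (d k u) • u + (c • x - K (r u) x) := by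
      rw [hd, iterLieVar, ← hd, ← map_iterLie, hiter]
      simp [Ring.lie_def, hr, hu, hc]
    rw [hiter] at key
    have hdm : d (m + 1) u = 0 := by rw [← key, hK x hx]
    have hfx : f (K (r u) x) = 0 := by
      have := congrArg f (hstep m)
      simpa [hdm, hu, hx] using this
    have hlin (k : ℕ) : d k u = (k : ℂ) • (c • x - K (r u) x) := by
      induction k with
      | zero => simpa [hd, iterLieVar] using hK x hx
      | succ k ih =>
        rw [hstep, ih]
        simp [hfx, hx, add_smul]
    rw [hlin, smul_eq_zero, sub_eq_zero] at hdm
    exact (hdm.resolve_left (by exact_mod_cast m.succ_ne_zero)).symm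
  have := hker (z - f z • u) (by simp [hu])
  simpa [hc, smul_sub, smul_comm c, sub_left_inj] using this

lemma IsIterLieDeriv.apply_rankOne_eq_zero {m : ℕ} (h : IsIterLieDeriv φ (2 * m + 2) K)
    (hφ : Function.Injective φ) (hr : ∀ x z, φ (r x) z = f z • x) (hu : f u = 1)
    (hK : ∀ x, f x = 0 → K (r x) u = 0) (hKp : ∀ z : Module.End ℂ X, ⁅z, K (r u)⁆ = 0)
    {x : X} (hx : f x = 0) : K (r x) = 0 := by
  have hp : r u * r u = r u := hφ <| LinearMap.ext fun z => by simp [hr, hu]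
  have hfix : ⁅r x, r u⁆ = r x := hφ <| LinearMap.ext fun z => by
    simp [Ring.lie_def, hr, hu, hx]
  rcases eq_or_ne x 0 with rfl | hx0
  · have : r 0 = 0 := hφ <| LinearMap.ext fun z => by simp [hr]
    rw [this, map_zero]
  have hKx := hK x hx
  have hrange (z : X) : K (r x) z = f (K (r x) z) • u := by
    have := congrArg (fun T => T z) (h.map_lie_lie hp hKp (r x))
    simpa [hfix, Ring.lie_def, hr, hu, hKx] using this
  have hcomm (z : X) : f (K (r x) z) • x = (f z * f (K (r x) x)) • u := by
    have := congrArg (fun T => T z) (h.map_lie_lie_self hp hKp (r x))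
    simp only [hfix] at this
    simp only [Ring.lie_def, sub_self, map_zero, LinearMap.zero_apply, LinearMap.add_apply,
      LinearMap.sub_apply, Module.End.mul_apply, hr, map_smul, hKx, smul_zero, zero_sub, hx,
      zero_smul, ← hrange] at this
    have h2 : (2 : ℂ) • (f (K (r x) z) • x - f z • K (r x) x) = 0 := by
      rw [two_smul, this]
      simp; abel
    have h3 := (smul_eq_zero.1 h2).resolve_left two_ne_zero
    rw [sub_eq_zero.1 h3, mul_smul, ← hrange]
  have hKxx : f (K (r x) x) = 0 := by
    simpa [hu, hx] using (congrArg f (hcomm u)).symm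
  ext z
  have := hcomm z
  rw [hKxx, mul_zero, zero_smul, smul_eq_zero] at this
  rw [hrange, this.resolve_right hx0, zero_smul, LinearMap.zero_apply]

lemma IsIterLieDeriv.apply_eq_smul {m : ℕ} (h : IsIterLieDeriv φ (m + 1) K)
    (hφ : Function.Injective φ) (hr : ∀ x z, φ (r x) z = f z • x) (hu : f u = 1)
    (hK : ∀ x, f x = 0 → K (r x) u = 0) {c : ℂ} (hc : K (r u) u = c • u) (a : R) (z : X) :
    K a z = f (K a u) • z := by
  replace h : IsIterLieDeriv φ (2 * m + 2) K := by
    have := h.add_self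
    rwa [show m + 1 + (m + 1) = 2 * m + 2 by ring] at this
  have hp : r u * r u = r u := hφ <| LinearMap.ext fun z => by simp [hr, hu]
  have hKu := h.apply_rankOne_eq_smul hφ hr hu hK hc
  have hKp (w : Module.End ℂ X) : ⁅w, K (r u)⁆ = 0 := by
    ext z; simp [Ring.lie_def, hKu]
  have hKr {x : X} (hx : f x = 0) : K (r x) = 0 := h.apply_rankOne_eq_zero hφ hr hu hK hKp hx
  have hfKx (a : R) (x : X) (hx : f x = 0) : f (K a x) = 0 := by
    have hval : ⁅⁅a, r x⁆, r x⁆ = r ((-2 * f (φ a x)) • x) := hφ <| LinearMap.ext fun z => by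
      simp [Ring.lie_def, hr, hx]
      module
    have key := h.map_lie_lie_of_fixed hKp a (r x) (hKr hx)
      (by
        rw [hval]
        refine hφ <| LinearMap.ext fun z => ?_
        simp [Ring.lie_def, hr, hx, hu])
      (by
        ext z
        simp [Ring.lie_def, hr, hx, hu]
        module)
    rw [hval, hKr (by simp [hx])] at key
    have h2 : (2 * f (K a x)) • x = 0 := by
      have := congrArg (fun T => T u) key
      simp only [Ring.lie_def, LinearMap.zero_apply, LinearMap.sub_apply, Module.End.mul_apply, hr,
        map_smul, map_sub, hx, hu] at this
      simp only [one_smul, zero_smul, sub_zero, zero_sub, smul_eq_mul, mul_zero, one_mul] at this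
      rw [two_mul, add_smul, ← neg_eq_zero, this]
      module
    rcases smul_eq_zero.1 h2 with h3 | rfl
    · simpa using h3
    · simp
  have hKx (a : R) (x : X) (hx : f x = 0) : K a x = f (K a u) • x := by
    have hval : ⁅⁅a, r x⁆, r u⁆ = r (φ a x - f (φ a u) • x - f (φ a x) • u) :=
      hφ <| LinearMap.ext fun z => by
        simp [Ring.lie_def, hr, hx, hu]
        module
    have key := h.map_lie_lie_idempotent hp hKp a (r x)
    rw [hval, hKr (by simp [hx, hu]), hKr hx] at key
    have := congrArg (fun T => T u) key
    simp [Ring.lie_def, hr, hu, hx, hfKx a x hx] at this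
    exact (sub_eq_zero.1 this.symm)
  set y := K a u - f (K a u) • u with hy
  have hfy : f y = 0 := by simp [hy, hu]
  set a' := r u * a - r u * a * r u with ha'
  have ha'z (z : X) : φ a' z = (f (φ a z) - f z * f (φ a u)) • u := by
    simp [ha', hr, sub_smul, smul_smul]
  have hval : ⁅⁅a, r u⁆, r u⁆ = r (φ a u - f (φ a u) • u) + a' := hφ <| LinearMap.ext fun z => by
    rw [map_add, LinearMap.add_apply, ha'z]
    simp [Ring.lie_def, hr, hu]
    module
  have hKa' (z : X) : K a' z = f z • y := by
    have key := h.map_lie_lie hp hKp a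
    rw [hval, map_add, hKr (by simp [hu]), zero_add] at key
    have hz : K a z = f z • K a u + f (K a u) • (z - f z • u) := by
      have := hKx a (z - f z • u) (by simp [hu])
      rw [← this]; simp
    rw [key]
    simp [Ring.lie_def, hr, hu, hz, hy]
  have hy0 : y = 0 := by
    by_contra hne
    have key := h.map_lie_lie_self hp hKp a'
    have hlie : ⁅a', r u⁆ = -a' := hφ <| LinearMap.ext fun z => by
      simp [Ring.lie_def, hr, hu, ha'z]
    rw [hlie] at key
    have hzero (z : X) (hz : f z = 0) : φ a' z = 0 := by
      have := congrArg (fun T => T z) key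
      simp [Ring.lie_def, hr, hu, hKa', ha'z, hz, hfy] at this
      have h2 : (2 * f (φ a z)) • y = 0 := by
        rw [two_mul, add_smul]
        simpa using this.symm
      have h3 : f (φ a z) = 0 := by simpa using (smul_eq_zero.1 h2).resolve_right hne
      simp [ha'z, hz, h3]
    have ha0 : a' = 0 := hφ <| LinearMap.ext fun z => by
      have h1 := hzero (z - f z • u) (by simp [hu])
      have h2 : φ a' u = 0 := by simp [ha'z, hu]
      simpa [h2] using h1
    apply hne
    simpa [ha0, hu] using (hKa' u).symm
  have := hKx a (z - f z • u) (by simp [hu])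
  rw [hy, sub_eq_zero] at hy0
  rw [map_sub, map_smul, hy0, sub_eq_iff_eq_add] at this
  rw [this]
  simp [hu]
  module

end RankOne

lemma exists_continuousLinearMap_eq_zero_on {X : Type*} [NormedAddCommGroup X] [NormedSpace ℂ X]
    (M : Submodule ℂ X) (hM : IsClosed (M : Set X)) (hne : M < ⊤) :
    ∃ (f : X →L[ℂ] ℂ) (u : X), (∀ x ∈ M, f x = 0) ∧ f u = 1 := by
  obtain ⟨v, -, hv⟩ := SetLike.exists_of_lt hne
  have : IsClosed (M : Set X) := hM
  obtain ⟨g, hg⟩ := SeparatingDual.exists_ne_zero (R := ℂ) (x := M.mkQL v) (by simpa using hv)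
  refine ⟨g.comp M.mkQL, (g (M.mkQL v))⁻¹ • v, fun x hx => ?_, ?_⟩
  · have : M.mkQL x = 0 := by simpa using hx
    rw [ContinuousLinearMap.comp_apply, this, map_zero]
  · rw [map_smul, ContinuousLinearMap.comp_apply, smul_eq_mul, inv_mul_cancel₀ hg]

lemma smulRight_mem_nestAlgebra {X : Type*} [NormedAddCommGroup X] [NormedSpace ℂ X]
    {𝒩 : Set (Submodule ℂ X)} {f : X →L[ℂ] ℂ} (hf : ∀ x ∈ nestXminus 𝒩, f x = 0) (x : X) :
    f.smulRight x ∈ nestAlgebra 𝒩 := by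
  intro N hN y hy
  by_cases hNt : N = ⊤
  · simp [hNt]
  · have hle : N ≤ nestXminus 𝒩 :=
      (le_sSup (show N ∈ {N | N ∈ 𝒩 ∧ N ≠ ⊤} from ⟨hN, hNt⟩)).trans
        (Submodule.le_topologicalClosure _)
    simp [hf y (hle hy)]

lemma IsLieNDeriv.isIterLieDeriv {B : Type*} [Ring B] [Algebra ℂ B] {𝒜 : Subalgebra ℂ B} {m : ℕ}
    {L : ↥𝒜 →ₗ[ℂ] B} (hL : IsLieNDeriv 𝒜 (m + 1) L) :
    IsIterLieDeriv (𝒜.val : ↥𝒜 →+* B) m L := by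
  intro a
  have := hL fun i => a i
  rw [commPoly_eq_iterLie] at this
  rw [this]
  exact sum_commPoly_update_eq_iterLieVar (fun i => (a i : B)) (fun i => L (a i)) m

/-- (Corollary 3.12 of the paper.)  Let `X` be a complex Banach space
with `dim X > 2` and `𝒩` a non-trivial nest on `X` with `X₋ ⊊ X`.  Then every Lie
`n`-derivation `L : Alg 𝒩 → B(X)` (`n ≥ 2`) decomposes as `L = D + H` with `D` a
derivation and `H` a linear map into `ℂ I` vanishing on all `(n-1)`-th commutators;
moreover, if `L` is continuous then `D, H` can be chosen continuous. -/
theorem statement14 {X : Type*} [NormedAddCommGroup X] [NormedSpace ℂ X] [CompleteSpace X]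
    (hdim : 2 < Module.rank ℂ X)
    (𝒩 : Set (Submodule ℂ X)) (hnest : IsNest 𝒩)
    (hnontrivial : 𝒩 ≠ ({⊥, ⊤} : Set (Submodule ℂ X)))
    (hXm : nestXminus 𝒩 < ⊤)
    (n : ℕ) (hn : 2 ≤ n)
    (L : ↥(nestAlgebra 𝒩) →ₗ[ℂ] (X →L[ℂ] X))
    (hL : IsLieNDeriv (nestAlgebra 𝒩) n L) :
    (∃ D H : ↥(nestAlgebra 𝒩) →ₗ[ℂ] (X →L[ℂ] X),
        IsDerivOn (nestAlgebra 𝒩) D ∧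
        (∀ a : ↥(nestAlgebra 𝒩), ∃ c : ℂ, H a = c • (1 : X →L[ℂ] X)) ∧
        (∀ a : Fin n → ↥(nestAlgebra 𝒩), H (commPoly n a) = 0) ∧
        L = D + H) ∧
    (Continuous L →
      ∃ D H : ↥(nestAlgebra 𝒩) →ₗ[ℂ] (X →L[ℂ] X),
        IsDerivOn (nestAlgebra 𝒩) D ∧
        (∀ a : ↥(nestAlgebra 𝒩), ∃ c : ℂ, H a = c • (1 : X →L[ℂ] X)) ∧
        (∀ a : Fin n → ↥(nestAlgebra 𝒩), H (commPoly n a) = 0) ∧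
        L = D + H ∧ Continuous D ∧ Continuous H) := by
  obtain ⟨m, rfl⟩ : ∃ m, n = m + 2 := ⟨n - 2, by omega⟩
  obtain ⟨f, u, hf, hu⟩ := exists_continuousLinearMap_eq_zero_on (nestXminus 𝒩)
    (Submodule.isClosed_topologicalClosure _) hXm
  set r : X → nestAlgebra 𝒩 := fun x => ⟨f.smulRight x, smulRight_mem_nestAlgebra hf x⟩ with hr_def
  have r_add (x y : X) : r (x + y) = r x + r y := Subtype.ext <| by ext z; simp [hr_def]
  have r_smul (c : ℂ) (x : X) : r (c • x) = c • r x := Subtype.ext <| by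
    ext z; simp [hr_def, smul_comm c]
  let T : X →ₗ[ℂ] X :=
    { toFun := fun x => L (r x) u - (f x * f (L (r u) u)) • u
      map_add' := fun x y => by simp [r_add]; module
      map_smul' := fun c x => by simp [r_smul, smul_sub, smul_smul, mul_assoc] }
  have hT (x : X) : T x = L (r x) u - (f x * f (L (r u) u)) • u := rfl
  let φ : nestAlgebra 𝒩 →+* Module.End ℂ X :=
    ContinuousLinearMap.toLinearMapRingHom.comp ((nestAlgebra 𝒩).val : _ →+* (X →L[ℂ] X))
  have hφ_apply (a : nestAlgebra 𝒩) (x : X) : φ a x = (a : X →L[ℂ] X) x := rfl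
  have hφ : Function.Injective φ := fun a b h =>
    Subtype.ext <| ContinuousLinearMap.ext fun x => congrArg (fun S => S x) h
  let K : nestAlgebra 𝒩 →ₗ[ℂ] Module.End ℂ X :=
    { toFun := fun a => (L a : X →ₗ[ℂ] X) - ⁅T, φ a⁆
      map_add' := fun a b => by
        ext x; simp [Ring.lie_def]; abel
      map_smul' := fun c a => by
        ext x; simp [Ring.lie_def, hφ_apply, smul_sub] }
  have hK_apply (a : nestAlgebra 𝒩) (x : X) :
      K a x = L a x - (T ((a : X →L[ℂ] X) x) - (a : X →L[ℂ] X) (T x)) := rfl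
  have hKlie : IsIterLieDeriv φ (m + 1) K := by
    intro a
    have key := congrArg ContinuousLinearMap.toLinearMapRingHom (hL.isIterLieDeriv a)
    rw [map_iterLieVar] at key
    change ContinuousLinearMap.toLinearMapRingHom (L _) - ⁅T, φ _⁆ =
      iterLieVar _ (fun i => ContinuousLinearMap.toLinearMapRingHom (L (a i)) - ⁅T, φ (a i)⁆) _
    rw [iterLieVar_sub, iterLieVar_inner, key, map_iterLie]
    rfl
  have hTu : f (T u) = 0 := by simp [hT, hu]
  have hscalar (a : nestAlgebra 𝒩) (z : X) : K a z = f (K a u) • z := by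
    refine IsIterLieDeriv.apply_eq_smul (φ := φ) (f := f) (r := r) (K := K.toAddMonoidHom)
      hKlie hφ (fun x z => rfl) hu (fun x hx => ?_) (c := f (L (r u) u)) ?_ a z
    · replace hx : f x = 0 := hx
      change K (r x) u = 0
      rw [hK_apply]
      simp [hr_def, hu, hTu]
      simp [hT, hx, hr_def]
    · change K (r u) u = _
      rw [hK_apply]
      simp [hr_def, hu, hTu]
      simp [hT, hu, hr_def]
  let H : nestAlgebra 𝒩 →ₗ[ℂ] (X →L[ℂ] X) :=
    { toFun := fun a => f (K a u) • 1
      map_add' := fun a b => by simp [add_smul]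
      map_smul' := fun c a => by simp [mul_smul] }
  have hH_apply (a : nestAlgebra 𝒩) : H a = f (K a u) • 1 := rfl
  have hD_apply (a : nestAlgebra 𝒩) (x : X) :
      (L - H) a x = T ((a : X →L[ℂ] X) x) - (a : X →L[ℂ] X) (T x) := by
    have := hscalar a x
    rw [hK_apply a x] at this
    simp [hH_apply, ← this]
  have hD : IsDerivOn (nestAlgebra 𝒩) (L - H) := by
    intro a b
    ext x
    change (L - H) (a * b) x = (L - H) a ((b : X →L[ℂ] X) x) + (a : X →L[ℂ] X) ((L - H) b x)
    rw [hD_apply, hD_apply, hD_apply, map_sub]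
    exact (sub_add_sub_cancel _ _ _).symm
  have hHcomm (a : Fin (m + 2) → nestAlgebra 𝒩) : H (commPoly (m + 2) a) = 0 := by
    have ha := commPoly_eq_iterLie (fun j : ℕ => a (Fin.ofNat (m + 2) j)) (m + 1)
    simp only [Fin.ofNat_eq_cast, Fin.cast_val_eq_self] at ha
    rw [ha, hH_apply, hKlie, iterLieVar_succ_eq_zero]
    · simp
    · intro i z
      ext x
      rw [Ring.lie_def, LinearMap.sub_apply, Module.End.mul_apply, Module.End.mul_apply, hscalar _ x,
        hscalar _ (z x), map_smul, sub_self, LinearMap.zero_apply]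
  have hLDH : L = (L - H) + H := (sub_add_cancel L H).symm
  refine ⟨⟨L - H, H, hD, fun a => ⟨_, hH_apply a⟩, hHcomm, hLDH⟩, fun hcont => ?_⟩
  have hr_cont : Continuous r :=
    Continuous.subtype_mk (ContinuousLinearMap.smulRightL ℂ X X f).continuous _
  have hT_cont : Continuous T := by
    change Continuous fun x => L (r x) u - (f x * f (L (r u) u)) • u
    fun_prop
  have hH_cont : Continuous H := by
    change Continuous fun a : nestAlgebra 𝒩 =>
      f (L a u - (T ((a : X →L[ℂ] X) u) - (a : X →L[ℂ] X) (T u))) • (1 : X →L[ℂ] X)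
    fun_prop
  exact ⟨L - H, H, hD, fun a => ⟨_, hH_apply a⟩, hHcomm, hLDH, hcont.sub hH_cont, hH_cont⟩
end
end

section
/- Let X be a complex Banach space and 𝒩 a non-trivial nest on X such that X_-^⊥ = {0} (equivalently dim X_-^⊥ = 0). Then for every n ≥ 2 and every Lie n-derivation L : Alg 𝒩 → B(X) there exist a derivation D : Alg 𝒩 → B(X) and a linear map H : Alg 𝒩 → ℂI vanishing on every (n−1)-th commutator p_n(A_1,…,A_n) with A_1,…,A_n ∈ Alg 𝒩 such that L = D + H; moreover, if L is continuous then D and H can be chosen continuous. -/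
open scoped Classical

set_option synthInstance.maxHeartbeats 1000000
set_option maxHeartbeats 1000000

noncomputable section

/-- The annihilator of a subspace `S` of `X` inside the continuous dual `X*`. -/
def annihilatorOf {X : Type*} [NormedAddCommGroup X] [NormedSpace ℂ X]
    (S : Submodule ℂ X) : Submodule ℂ (X →L[ℂ] ℂ) where
  carrier := {f | ∀ x ∈ S, f x = 0}
  add_mem' := fun {f g} hf hg x hx => by simp [hf x hx, hg x hx]
  zero_mem' := fun x _ => by simp
  smul_mem' := fun c f hf x hx => by simp [hf x hx]

open Function

section CommPoly

variable {B : Type*} [Ring B]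

theorem commPoly_succ (m : ℕ) (b : Fin (m + 2) → B) :
    commPoly (m + 2) b = commPoly (m + 1) (fun i => b i.castSucc) * b (Fin.last (m + 1)) -
      b (Fin.last (m + 1)) * commPoly (m + 1) (fun i => b i.castSucc) := rfl

theorem coe_commPoly [Algebra ℂ B] (𝒜 : Subalgebra ℂ B) (n : ℕ) (a : Fin n → 𝒜) :
    ((commPoly n a : 𝒜) : B) = commPoly n (fun i => (a i : B)) := by
  induction n with
  | zero => rfl
  | succ m ih =>
    cases m with
    | zero => rfl
    | succ m => rw [commPoly_succ, commPoly_succ, ← ih]; rfl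

/-- The sum of the values of `p_n` obtained by replacing the `k`-th argument by `F k`. -/
def commPolySum (n : ℕ) (b F : Fin n → B) : B := ∑ k, commPoly n (update b k (F k))

theorem commPolySum_one (b F : Fin 1 → B) : commPolySum 1 b F = F 0 := by
  simp [commPolySum, commPoly]

theorem commPolySum_succ (m : ℕ) (b F : Fin (m + 2) → B) :
    commPolySum (m + 2) b F =
      (commPolySum (m + 1) (fun i => b i.castSucc) (fun i => F i.castSucc) * b (Fin.last (m + 1)) -
        b (Fin.last (m + 1)) *
          commPolySum (m + 1) (fun i => b i.castSucc) (fun i => F i.castSucc)) +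
      (commPoly (m + 1) (fun i => b i.castSucc) * F (Fin.last (m + 1)) -
        F (Fin.last (m + 1)) * commPoly (m + 1) (fun i => b i.castSucc)) := by
  unfold commPolySum
  rw [Fin.sum_univ_castSucc, Finset.sum_mul, Finset.mul_sum, ← Finset.sum_sub_distrib]
  congr 1
  · refine Finset.sum_congr rfl fun k _ => ?_
    have h : (fun i : Fin (m + 1) => update b k.castSucc (F k.castSucc) i.castSucc) =
        update (fun i => b i.castSucc) k (F k.castSucc) := by
      ext i
      simp [update_apply]
    rw [commPoly_succ, h, update_of_ne (Fin.castSucc_lt_last k).ne']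
  · have h : (fun i : Fin (m + 1) => update b (Fin.last (m + 1)) (F (Fin.last (m + 1)))
        i.castSucc) = fun i => b i.castSucc := by
      ext i
      exact update_of_ne (Fin.castSucc_lt_last i).ne _ _
    rw [commPoly_succ, h, update_self]

theorem commPolySum_add (n : ℕ) (b F G : Fin n → B) :
    commPolySum n b (fun i => F i + G i) = commPolySum n b F + commPolySum n b G := by
  induction n with
  | zero => simp [commPolySum]
  | succ m ih =>
    cases m with
    | zero => simp [commPolySum_one]
    | succ m => rw [commPolySum_succ, commPolySum_succ, commPolySum_succ, ih]; noncomm_ring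

variable [Algebra ℂ B]

theorem commPolySum_smul_self (n : ℕ) (c : ℂ) (b : Fin n → B) :
    commPolySum n b (fun i => c • b i) = ((n : ℂ) * c) • commPoly n b := by
  induction n with
  | zero => simp [commPolySum]
  | succ m ih =>
    cases m with
    | zero => simp [commPolySum_one, commPoly]
    | succ m =>
      rw [commPolySum_succ, commPoly_succ, ih]
      simp only [smul_mul_assoc, mul_smul_comm, ← smul_sub, ← add_smul]
      congr 1
      push_cast
      ring

theorem exists_commPolySum_scalar (m : ℕ) (s : Fin (m + 1) → ℂ) (b : Fin (m + 1) → B) :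
    ∃ c : ℂ, commPolySum (m + 1) b (fun i => s i • 1) = c • 1 := by
  induction m with
  | zero => exact ⟨s 0, commPolySum_one _ _⟩
  | succ m ih =>
    obtain ⟨c, hc⟩ := ih (fun i => s i.castSucc) (fun i => b i.castSucc)
    exact ⟨0, by rw [commPolySum_succ, hc]; simp⟩

theorem commPolySum_scalar (m : ℕ) (s : Fin (m + 2) → ℂ) (b : Fin (m + 2) → B) :
    commPolySum (m + 2) b (fun i => s i • 1) = 0 := by
  obtain ⟨c, hc⟩ := exists_commPolySum_scalar m (fun i => s i.castSucc) (fun i => b i.castSucc)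
  rw [commPolySum_succ, hc]
  simp

theorem IsDerivOn.map_commPoly {𝒜 : Subalgebra ℂ B} {D : 𝒜 →ₗ[ℂ] B} (hD : IsDerivOn 𝒜 D)
    (n : ℕ) (a : Fin n → 𝒜) :
    D (commPoly n a) = commPolySum n (fun i => (a i : B)) (fun i => D (a i)) := by
  induction n with
  | zero => simp [commPolySum, commPoly]
  | succ m ih =>
    cases m with
    | zero => simp [commPolySum_one, commPoly]
    | succ m =>
      rw [commPolySum_succ, commPoly_succ, map_sub, hD, hD, ih, coe_commPoly]
      noncomm_ring

end CommPoly

section Functionals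

variable {X : Type*} [NormedAddCommGroup X] [NormedSpace ℂ X]

theorem exists_functional_of_notMem {P : Submodule ℂ X} (hP : IsClosed (P : Set X)) {y : X}
    (hy : y ∉ P) : ∃ k : X →L[ℂ] ℂ, (∀ v ∈ P, k v = 0) ∧ k y = 1 := by
  have : IsClosed (P : Set X) := hP
  obtain ⟨g, hg⟩ := SeparatingDual.exists_eq_one (R := ℂ) (V := X ⧸ P) (x := P.mkQ y)
    (by simpa using hy)
  exact ⟨g.comp P.mkQL, fun v hv => by simp [(Submodule.Quotient.mk_eq_zero P).2 hv], hg⟩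

theorem mem_span_of_forall_functional {x r : X}
    (h : ∀ φ : X →L[ℂ] ℂ, φ x = 0 → φ r = 0) : ∃ s : ℂ, r = s • x := by
  by_contra hr
  have hr' : r ∉ Submodule.span ℂ {x} := fun hm => by
    obtain ⟨s, hs⟩ := Submodule.mem_span_singleton.1 hm
    exact hr ⟨s, hs.symm⟩
  obtain ⟨k, hk, hk1⟩ := exists_functional_of_notMem
    (Submodule.closed_of_finiteDimensional (Submodule.span ℂ {x})) hr'
  have := h k (hk x (Submodule.mem_span_singleton_self x))
  simp [hk1] at this

/-- Bounded operators `T` with `φ ∘ T = 0` and `T w = 0` are closed under `p_n`. -/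
theorem commPoly_annihilates {φ : X →L[ℂ] ℂ} {w : X} (m : ℕ) (b : Fin (m + 1) → X →L[ℂ] X)
    (hb : ∀ i, (∀ v, φ (b i v) = 0) ∧ b i w = 0) :
    (∀ v, φ (commPoly (m + 1) b v) = 0) ∧ commPoly (m + 1) b w = 0 := by
  induction m with
  | zero => exact hb 0
  | succ m ih =>
    obtain ⟨h1, h2⟩ := ih (fun i => b i.castSucc) (fun i => hb _)
    rw [commPoly_succ]
    constructor
    · intro v
      simp [h1, (hb (Fin.last (m + 1))).1]
    · simp [h2, (hb (Fin.last (m + 1))).2]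

theorem commPolySum_annihilates {φ : X →L[ℂ] ℂ} {w : X} (m : ℕ) (b F : Fin (m + 2) → X →L[ℂ] X)
    (hb : ∀ i, (∀ v, φ (b i v) = 0) ∧ b i w = 0) :
    φ (commPolySum (m + 2) b F w) = 0 := by
  obtain ⟨h1, h2⟩ := commPoly_annihilates m (fun i => b i.castSucc) (fun i => hb _)
  rw [commPolySum_succ]
  simp [h1, h2, (hb (Fin.last (m + 1))).1, (hb (Fin.last (m + 1))).2]

end Functionals

section Nest

variable {X : Type*} [NormedAddCommGroup X] [NormedSpace ℂ X] {𝒩 : Set (Submodule ℂ X)}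

/-- The rank-one operator `v ↦ f v • x`. -/
def rankOne (x : X) (f : X →L[ℂ] ℂ) : X →L[ℂ] X := f.smulRight x

@[simp]
theorem rankOne_apply (x : X) (f : X →L[ℂ] ℂ) (v : X) : rankOne x f v = f v • x := rfl

theorem mul_rankOne (A : X →L[ℂ] X) (x : X) (f : X →L[ℂ] ℂ) :
    A * rankOne x f = rankOne (A x) f := by
  ext v
  simp

theorem rankOne_ne_zero {x : X} {f : X →L[ℂ] ℂ} (hx : x ≠ 0) (hf : f ≠ 0) : rankOne x f ≠ 0 := by
  obtain ⟨v, hv⟩ : ∃ v, f v ≠ 0 := by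
    by_contra! h
    exact hf (ContinuousLinearMap.ext h)
  intro h
  have := congrArg (fun T : X →L[ℂ] X => T v) h
  simp [hv, hx] at this

theorem rankOne_mem (hnest : IsNest 𝒩) {N : Submodule ℂ X} (hN : N ∈ 𝒩) {x : X} (hx : x ∈ N)
    {f : X →L[ℂ] ℂ} (hf : ∀ v ∈ N, f v = 0) : rankOne x f ∈ nestAlgebra 𝒩 := by
  intro M hM v hv
  rcases hnest.total M hM N hN with h | h
  · simp [hf v (h hv)]
  · exact M.smul_mem _ (h hx)

/-- `N'` is contained in `N` with enough room in between: `N` meets every closed hyperplane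
outside any one-dimensional enlargement of `N'`. -/
def IsRoomy (N' N : Submodule ℂ X) : Prop :=
  N' ≤ N ∧ ∀ (φ : X →L[ℂ] ℂ) (w : X), ∃ y ∈ N, φ y = 0 ∧ y ∉ N' ⊔ Submodule.span ℂ {w}

theorem exists_notMem_sup_span {P M₁ M₂ : Submodule ℂ X} (h₁ : P < M₁) (h₂ : M₁ < M₂) (w : X) :
    ∃ y ∈ M₂, y ∉ P ⊔ Submodule.span ℂ {w} := by
  by_contra! h
  obtain ⟨t, htM, htP⟩ := SetLike.exists_of_lt h₁
  obtain ⟨p, hp, u, hu, htu⟩ := Submodule.mem_sup.1 (h t (h₂.le htM))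
  obtain ⟨c, rfl⟩ := Submodule.mem_span_singleton.1 hu
  have hc : c ≠ 0 := by
    rintro rfl
    exact htP (by simpa [← htu] using hp)
  have hw : w ∈ M₁ := by
    rw [← M₁.smul_mem_iff hc, show c • w = t - p by rw [← htu]; abel]
    exact M₁.sub_mem htM (h₁.le hp)
  refine h₂.not_ge fun v hv => (sup_le h₁.le ?_ : P ⊔ Submodule.span ℂ {w} ≤ M₁) (h v hv)
  simpa [Submodule.span_le] using hw

theorem isRoomy_of_chain {P M₁ M₂ M₃ M₄ : Submodule ℂ X} (h₁ : P < M₁) (h₂ : M₁ < M₂)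
    (h₃ : M₂ < M₃) (h₄ : M₃ < M₄) : IsRoomy P M₄ := by
  refine ⟨(h₁.trans (h₂.trans (h₃.trans h₄))).le, fun φ w => ?_⟩
  by_cases hφ : ∀ v ∈ M₂, φ v = 0
  · obtain ⟨y, hy, hyP⟩ := exists_notMem_sup_span h₁ h₂ w
    exact ⟨y, (h₃.trans h₄).le hy, hφ y hy, hyP⟩
  · push Not at hφ
    obtain ⟨m, hm, hφm⟩ := hφ
    obtain ⟨y, hy, hyP⟩ := exists_notMem_sup_span h₃ h₄ w
    refine ⟨y - (φ y / φ m) • m, M₄.sub_mem hy (M₄.smul_mem _ ((h₃.trans h₄).le hm)), ?_, ?_⟩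
    · simp [hφm]
    · intro h
      refine hyP ?_
      rw [← sub_add_cancel y ((φ y / φ m) • m)]
      exact add_mem (sup_le_sup_right (h₁.trans h₂).le _ h)
        (Submodule.mem_sup_left (M₂.smul_mem _ hm))

/-- There is a chain of length `m` of roomy inclusions of members of the nest from `K` to `N`. -/
def NestGap (𝒩 : Set (Submodule ℂ X)) : ℕ → Submodule ℂ X → Submodule ℂ X → Prop
  | 0, K, N => K ≤ N
  | m + 1, K, N => ∃ N' ∈ 𝒩, NestGap 𝒩 m K N' ∧ IsRoomy N' N

theorem NestGap.le {m : ℕ} {K N : Submodule ℂ X} (h : NestGap 𝒩 m K N) : K ≤ N := by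
  induction m generalizing N with
  | zero => exact h
  | succ m ih =>
    obtain ⟨N', -, h', hr⟩ := h
    exact (ih h').trans hr.1

theorem NestGap.mono {m : ℕ} {K K' N N' : Submodule ℂ X} (h : NestGap 𝒩 m K N) (hK : K' ≤ K)
    (hN : N ≤ N') : NestGap 𝒩 m K' N' := by
  induction m generalizing N N' with
  | zero => exact hK.trans (h.trans hN)
  | succ m ih =>
    obtain ⟨P, hP, h', hr⟩ := h
    refine ⟨P, hP, ih h' le_rfl, hr.1.trans hN, fun φ w => ?_⟩
    obtain ⟨y, hy, hy'⟩ := hr.2 φ w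
    exact ⟨y, hN hy, hy'⟩

theorem exists_commPoly_eq_rankOne (hnest : IsNest 𝒩) {m : ℕ} {K N : Submodule ℂ X}
    (hN : N ∈ 𝒩) (h : NestGap 𝒩 m K N) {x : X} (hx : x ∈ K) {f : X →L[ℂ] ℂ}
    (hf : ∀ v ∈ N, f v = 0) {φ : X →L[ℂ] ℂ} {w : X} (hφ : φ x = 0) (hw : f w = 0) :
    ∃ a : Fin (m + 1) → X →L[ℂ] X, (∀ i, a i ∈ nestAlgebra 𝒩) ∧
      (∀ i, (∀ v, φ (a i v) = 0) ∧ a i w = 0) ∧ commPoly (m + 1) a = rankOne x f := by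
  induction m generalizing N f with
  | zero =>
    exact ⟨fun _ => rankOne x f, fun _ => rankOne_mem hnest hN (h hx) hf,
      fun _ => ⟨fun v => by simp [hφ], by simp [hw]⟩, rfl⟩
  | succ m ih =>
    obtain ⟨N', hN', h', hle, hr⟩ := h
    obtain ⟨y, hy, hφy, hyN'⟩ := hr φ w
    obtain ⟨g, hg, hgy⟩ := exists_functional_of_notMem
      (Submodule.isClosed_sup_finiteDimensional N' (Submodule.span ℂ {w}) (hnest.closed N' hN'))
      hyN'
    obtain ⟨a, ha, hann, hcomm⟩ := ih hN' h' (fun v hv => hg v (Submodule.mem_sup_left hv))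
      (hg w (Submodule.mem_sup_right (Submodule.mem_span_singleton_self w)))
    refine ⟨Fin.snoc a (rankOne y f), fun i => ?_, fun i => ?_, ?_⟩
    · refine Fin.lastCases ?_ (fun i => ?_) i
      · simpa using rankOne_mem hnest hN hy hf
      · simpa using ha i
    · refine Fin.lastCases ?_ (fun i => ?_) i
      · simp [hφy, hw]
      · simpa using hann i
    · rw [commPoly_succ]
      simp only [Fin.snoc_castSucc, Fin.snoc_last, hcomm]
      ext v
      simp [hgy, hf x (hle (h'.le hx))]

end Nest

section UnboundedNest

variable {X : Type*} [NormedAddCommGroup X] [NormedSpace ℂ X] {𝒩 : Set (Submodule ℂ X)}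

/-- A nest whose proper members have no largest element and a dense union. -/
structure IsUnboundedNest (𝒩 : Set (Submodule ℂ X)) : Prop extends IsNest 𝒩 where
  exists_gt : ∀ K ∈ 𝒩, K ≠ ⊤ → ∃ M ∈ 𝒩, K < M ∧ M ≠ ⊤
  bot_ne_top : (⊥ : Submodule ℂ X) ≠ ⊤
  dense : Dense {v : X | ∃ K ∈ 𝒩, K ≠ ⊤ ∧ v ∈ K}

theorem IsNest.isUnboundedNest (hnest : IsNest 𝒩)
    (hnontrivial : 𝒩 ≠ ({⊥, ⊤} : Set (Submodule ℂ X)))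
    (hann : annihilatorOf (nestXminus 𝒩) = ⊥) : IsUnboundedNest 𝒩 := by
  have hbot : (⊥ : Submodule ℂ X) ≠ ⊤ := by
    intro h
    refine hnontrivial (Set.ext fun N => ?_)
    have hN : N = ⊥ := le_antisymm (h ▸ le_top) bot_le
    simp [hN, hnest.bot_mem]
  have hX : nestXminus 𝒩 = ⊤ := by
    refine (Submodule.eq_top_iff' ).2 fun y => ?_
    by_contra hy
    obtain ⟨k, hk, hky⟩ :=
      exists_functional_of_notMem (Submodule.isClosed_topologicalClosure _) hy
    have hk0 : k ∈ annihilatorOf (nestXminus 𝒩) := hk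
    rw [hann, Submodule.mem_bot] at hk0
    simp [hk0] at hky
  refine { hnest with exists_gt := fun K hK hKtop => ?_, bot_ne_top := hbot, dense := ?_ }
  · by_contra! h
    refine hKtop (top_le_iff.1 ?_)
    rw [← hX]
    refine Submodule.topologicalClosure_minimal _ (sSup_le fun M hM => ?_) (hnest.closed K hK)
    rcases hnest.total M hM.1 K hK with hMK | hKM
    · exact hMK
    · by_contra hne
      exact hM.2 (h M hM.1 (lt_of_le_not_ge hKM hne))
  · have hd := (Submodule.dense_iff_topologicalClosure_eq_top
      (s := sSup {N | N ∈ 𝒩 ∧ N ≠ (⊤ : Submodule ℂ X)})).2 hX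
    have hne : {N | N ∈ 𝒩 ∧ N ≠ (⊤ : Submodule ℂ X)}.Nonempty := ⟨⊥, hnest.bot_mem, hbot⟩
    refine hd.mono fun v hv => ?_
    rw [SetLike.mem_coe, Submodule.mem_sSup_of_directed hne] at hv
    · obtain ⟨N, hN, hvN⟩ := hv
      exact ⟨N, hN.1, hN.2, hvN⟩
    · intro M hM N hN
      rcases hnest.total M hM.1 N hN.1 with h | h
      · exact ⟨N, hN, h, le_rfl⟩
      · exact ⟨M, hM, le_rfl, h⟩

/-- `K` and `N` are members of the nest, `N` is proper and there is a gap of length `m` between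
them. -/
structure IsGapPair (𝒩 : Set (Submodule ℂ X)) (m : ℕ) (K N : Submodule ℂ X) : Prop where
  left_mem : K ∈ 𝒩
  right_mem : N ∈ 𝒩
  ne_top : N ≠ ⊤
  gap : NestGap 𝒩 m K N

namespace IsGapPair

variable {m : ℕ} {K N : Submodule ℂ X}

theorem le (h : IsGapPair 𝒩 m K N) : K ≤ N := h.gap.le

theorem of_succ (h : IsGapPair 𝒩 (m + 1) K N) : IsGapPair 𝒩 m K N := by
  obtain ⟨N', -, h', hr⟩ := h.gap
  exact ⟨h.left_mem, h.right_mem, h.ne_top, h'.mono le_rfl hr.1⟩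

theorem rankOne_mem (hnest : IsNest 𝒩) (h : IsGapPair 𝒩 m K N) {x : X} (hx : x ∈ K)
    {f : X →L[ℂ] ℂ} (hf : ∀ v ∈ N, f v = 0) : rankOne x f ∈ nestAlgebra 𝒩 :=
  _root_.rankOne_mem hnest h.right_mem (h.le hx) hf

end IsGapPair

namespace IsUnboundedNest

variable (h𝒩 : IsUnboundedNest 𝒩)
include h𝒩

theorem exists_isGapPair (m : ℕ) {K : Submodule ℂ X} (hK : K ∈ 𝒩) (hKt : K ≠ ⊤) :
    ∃ N, IsGapPair 𝒩 m K N := by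
  induction m with
  | zero => exact ⟨K, hK, hK, hKt, le_refl K⟩
  | succ m ih =>
    obtain ⟨N, hN⟩ := ih
    obtain ⟨M₁, hM₁, h₁, ht₁⟩ := h𝒩.exists_gt N hN.right_mem hN.ne_top
    obtain ⟨M₂, hM₂, h₂, ht₂⟩ := h𝒩.exists_gt M₁ hM₁ ht₁
    obtain ⟨M₃, hM₃, h₃, ht₃⟩ := h𝒩.exists_gt M₂ hM₂ ht₂
    obtain ⟨M₄, hM₄, h₄, ht₄⟩ := h𝒩.exists_gt M₃ hM₃ ht₃
    exact ⟨M₄, hK, hM₄, ht₄, N, hN.right_mem, hN.gap, isRoomy_of_chain h₁ h₂ h₃ h₄⟩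

theorem exists_ge {K₁ K₂ : Submodule ℂ X} (h₁ : K₁ ∈ 𝒩) (ht₁ : K₁ ≠ ⊤) (h₂ : K₂ ∈ 𝒩)
    (ht₂ : K₂ ≠ ⊤) : ∃ K ∈ 𝒩, K ≠ ⊤ ∧ K₁ ≤ K ∧ K₂ ≤ K := by
  rcases h𝒩.total K₁ h₁ K₂ h₂ with h | h
  · exact ⟨K₂, h₂, ht₂, h, le_rfl⟩
  · exact ⟨K₁, h₁, ht₁, le_rfl, h⟩

theorem ext_on_members {Y : Type*} [TopologicalSpace Y] [T2Space Y] {F G : X → Y}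
    (hF : Continuous F) (hG : Continuous G) (h : ∀ K ∈ 𝒩, K ≠ ⊤ → ∀ v ∈ K, F v = G v) (v : X) :
    F v = G v := by
  refine congrFun (hF.ext_on h𝒩.dense hG ?_) v
  rintro u ⟨K, hK, hKt, hu⟩
  exact h K hK hKt u hu

theorem exists_apply_eq_one {f : X →L[ℂ] ℂ} (hf : f ≠ 0) :
    ∃ K ∈ 𝒩, K ≠ ⊤ ∧ ∃ z ∈ K, f z = 1 := by
  by_contra! h
  refine hf (ContinuousLinearMap.ext (h𝒩.ext_on_members f.continuous continuous_const ?_))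
  intro K hK hKt v hv
  by_contra hne
  exact h K hK hKt ((f v)⁻¹ • v) (K.smul_mem _ hv) (by simpa using inv_mul_cancel₀ hne)

theorem exists_apply_ne_zero {f g : X →L[ℂ] ℂ} (hf : f ≠ 0) (hg : g ≠ 0) :
    ∃ K ∈ 𝒩, K ≠ ⊤ ∧ ∃ z ∈ K, f z ≠ 0 ∧ g z ≠ 0 := by
  obtain ⟨K₁, hK₁, hKt₁, z₁, hz₁, hf₁⟩ := h𝒩.exists_apply_eq_one hf
  obtain ⟨K₂, hK₂, hKt₂, z₂, hz₂, hg₂⟩ := h𝒩.exists_apply_eq_one hg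
  obtain ⟨K, hK, hKt, h₁, h₂⟩ := h𝒩.exists_ge hK₁ hKt₁ hK₂ hKt₂
  by_cases hg₁ : g z₁ = 0
  · by_cases hf₂ : f z₂ = 0
    · exact ⟨K, hK, hKt, z₁ + z₂, K.add_mem (h₁ hz₁) (h₂ hz₂), by simp [hf₁, hf₂],
        by simp [hg₁, hg₂]⟩
    · exact ⟨K, hK, hKt, z₂, h₂ hz₂, hf₂, by simp [hg₂]⟩
  · exact ⟨K, hK, hKt, z₁, h₁ hz₁, by simp [hf₁], hg₁⟩

theorem exists_ne_zero_functional {N : Submodule ℂ X} (hN : N ∈ 𝒩) (hNt : N ≠ ⊤) :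
    ∃ k : X →L[ℂ] ℂ, k ≠ 0 ∧ ∀ v ∈ N, k v = 0 := by
  obtain ⟨w, -, hw⟩ := SetLike.exists_of_lt (lt_top_iff_ne_top.2 hNt)
  obtain ⟨k, hk, hkw⟩ := exists_functional_of_notMem (h𝒩.closed N hN) hw
  refine ⟨k, ?_, hk⟩
  rintro rfl
  simp at hkw

theorem exists_functional_apply_eq_one {N : Submodule ℂ X} (hN : N ∈ 𝒩) (hNt : N ≠ ⊤)
    {f : X →L[ℂ] ℂ} {z : X} (hz : z ∈ N) (hfz : f z = 1) :
    ∃ (k : X →L[ℂ] ℂ) (w : X), (∀ v ∈ N, k v = 0) ∧ k w = 1 ∧ f w = 0 := by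
  obtain ⟨w, -, hw⟩ := SetLike.exists_of_lt (lt_top_iff_ne_top.2 hNt)
  obtain ⟨k, hk, hkw⟩ := exists_functional_of_notMem (h𝒩.closed N hN) hw
  exact ⟨k, w - f w • z, hk, by simp [hk z hz, hkw], by simp [hfz]⟩

theorem exists_ne_zero_member : ∃ K ∈ 𝒩, K ≠ ⊤ ∧ ∃ x ∈ K, x ≠ 0 := by
  obtain ⟨K, hK, hlt, hKt⟩ := h𝒩.exists_gt ⊥ h𝒩.bot_mem h𝒩.bot_ne_top
  obtain ⟨x, hx, hx0⟩ := SetLike.exists_of_lt hlt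
  exact ⟨K, hK, hKt, x, hx, by simpa using hx0⟩

end IsUnboundedNest

end UnboundedNest

section BracketRule

variable {X : Type*} [NormedAddCommGroup X] [NormedSpace ℂ X] {𝒩 : Set (Submodule ℂ X)}

/-- `L [e, c] = [E, c] + [e, L c]` for all `c ∈ 𝒜`. -/
def BracketRule (𝒜 : Subalgebra ℂ (X →L[ℂ] X)) (L : (X →L[ℂ] X) →ₗ[ℂ] (X →L[ℂ] X))
    (e E : X →L[ℂ] X) : Prop :=
  ∀ c ∈ 𝒜, L (e * c - c * e) = (E * c - c * E) + (e * L c - L c * e)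

variable {𝒜 : Subalgebra ℂ (X →L[ℂ] X)} {L : (X →L[ℂ] X) →ₗ[ℂ] (X →L[ℂ] X)}

theorem bracketRule_commPoly {m : ℕ}
    (hL : ∀ a : Fin (m + 2) → X →L[ℂ] X, (∀ i, a i ∈ 𝒜) →
      L (commPoly (m + 2) a) = commPolySum (m + 2) a (fun i => L (a i)))
    (a : Fin (m + 1) → X →L[ℂ] X) (ha : ∀ i, a i ∈ 𝒜) :
    BracketRule 𝒜 L (commPoly (m + 1) a) (commPolySum (m + 1) a (fun i => L (a i))) := by
  intro c hc
  have h := hL (Fin.snoc a c) fun i => by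
    refine Fin.lastCases ?_ (fun i => ?_) i
    · simpa using hc
    · simpa using ha i
  rw [commPoly_succ, commPolySum_succ] at h
  simpa only [Fin.snoc_castSucc, Fin.snoc_last] using h

theorem BracketRule.swap {e E c C : X →L[ℂ] X} (he : BracketRule 𝒜 L e E) (heA : e ∈ 𝒜)
    (hc : BracketRule 𝒜 L c C) (hcA : c ∈ 𝒜) :
    (E - L e) * c - c * (E - L e) = e * (C - L c) - (C - L c) * e := by
  have h₁ := he c hcA
  have h₂ := hc e heA
  rw [← neg_sub, map_neg, h₁] at h₂
  rw [← sub_eq_zero] at h₂ ⊢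
  rw [← neg_eq_zero, ← h₂]
  noncomm_ring

variable {m : ℕ} (h𝒩 : IsUnboundedNest 𝒩)
include h𝒩

theorem BracketRule.coeff_eq {K N K' N' : Submodule ℂ X} (hKN : IsGapPair 𝒩 m K N)
    (hKN' : IsGapPair 𝒩 m K' N') {x z : X} (hx : x ∈ K) (hx0 : x ≠ 0) (hz : z ∈ K')
    {f k : X →L[ℂ] ℂ} (hf : ∀ v ∈ N, f v = 0) (hk : ∀ v ∈ N', k v = 0) (hk0 : k ≠ 0)
    (hfz : f z ≠ 0) (hkx : k x = 0) {E C : X →L[ℂ] X}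
    (hE : BracketRule (nestAlgebra 𝒩) L (rankOne x f) E)
    (hC : BracketRule (nestAlgebra 𝒩) L (rankOne z k) C) {s t s' t' : ℂ}
    (hEs : E - L (rankOne x f) = s • 1 + t • rankOne x f)
    (hCs : C - L (rankOne z k) = s' • 1 + t' • rankOne z k) : t = t' := by
  have h := hE.swap (hKN.rankOne_mem h𝒩.toIsNest hx hf) hC
    (hKN'.rankOne_mem h𝒩.toIsNest hz hk)
  obtain ⟨w, hw⟩ : ∃ w, k w ≠ 0 := by
    by_contra! h0
    exact hk0 (ContinuousLinearMap.ext h0)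
  rw [hEs, hCs] at h
  have h' := congrArg (fun T : X →L[ℂ] X => T w) h
  simp [hkx, smul_smul] at h'
  have h'' : (t * (k w * f z) - t' * (k w * f z)) • x = 0 := by
    rw [← sub_eq_zero] at h'
    rw [← h']
    module
  rw [smul_eq_zero, or_iff_left hx0, ← sub_mul] at h''
  exact sub_eq_zero.1 ((mul_eq_zero.1 h'').resolve_right (mul_ne_zero hw hfz))

variable (hrule : ∀ K N, IsGapPair 𝒩 m K N → ∀ x ∈ K, ∀ f : X →L[ℂ] ℂ, (∀ v ∈ N, f v = 0) →
    ∃ E, BracketRule (nestAlgebra 𝒩) L (rankOne x f) E)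
include hrule

theorem BracketRule.exists_scalar_add_rankOne {K N : Submodule ℂ X} (hKN : IsGapPair 𝒩 m K N)
    {x : X} (hx : x ∈ K) (hx0 : x ≠ 0) {f : X →L[ℂ] ℂ} (hf : ∀ v ∈ N, f v = 0) (hf0 : f ≠ 0)
    {E : X →L[ℂ] X} (hE : BracketRule (nestAlgebra 𝒩) L (rankOne x f) E) :
    ∃ (s : ℂ) (μ : X →L[ℂ] ℂ), E - L (rankOne x f) = s • 1 + rankOne x μ := by
  set P := E - L (rankOne x f) with hP
  obtain ⟨K₁, hK₁, hKt₁, z₁, hz₁, hfz₁⟩ := h𝒩.exists_apply_eq_one hf0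
  have hz₁x : z₁ ∉ Submodule.span ℂ {x} := by
    intro h
    obtain ⟨c, rfl⟩ := Submodule.mem_span_singleton.1 h
    simp [hf x (hKN.le hx)] at hfz₁
  obtain ⟨φ₀, hφ₀, hφz⟩ := exists_functional_of_notMem
    (Submodule.closed_of_finiteDimensional (Submodule.span ℂ {x})) hz₁x
  have hφ₀x := hφ₀ x (Submodule.mem_span_singleton_self x)
  have key : ∀ K ∈ 𝒩, K ≠ ⊤ → ∀ z ∈ K, ∀ φ : X →L[ℂ] ℂ, φ x = 0 →
      φ (P z) = φ₀ (P z₁) * φ z := by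
    intro K₂ hK₂ hKt₂ z hz φ hφ
    obtain ⟨K', hK', hKt', h₁, h₂⟩ := h𝒩.exists_ge hK₁ hKt₁ hK₂ hKt₂
    obtain ⟨N', hN'⟩ := h𝒩.exists_isGapPair m hK' hKt'
    obtain ⟨k, w, hk, hkw, hfw⟩ :=
      h𝒩.exists_functional_apply_eq_one hN'.right_mem hN'.ne_top (hN'.le (h₁ hz₁)) hfz₁
    have aux : ∀ z' ∈ K', ∀ φ' : X →L[ℂ] ℂ, φ' x = 0 → φ' (P z') = k (P w) * φ' z' := by
      intro z' hz' φ' hφ'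
      obtain ⟨C, hC⟩ := hrule K' N' hN' z' hz' k hk
      have h := congrArg (fun T : X →L[ℂ] X => φ' (T w))
        (hE.swap (hKN.rankOne_mem h𝒩.toIsNest hx hf) hC (hN'.rankOne_mem h𝒩.toIsNest hz' hk))
      rw [← hP] at h
      simpa [hkw, hfw, hφ', sub_eq_zero] using h
    rw [aux z (h₂ hz) φ hφ, aux z₁ (h₁ hz₁) φ₀ hφ₀x, hφz, mul_one]
  obtain ⟨ψ, hψ⟩ := SeparatingDual.exists_eq_one (R := ℂ) hx0
  refine ⟨φ₀ (P z₁), ψ.comp (P - φ₀ (P z₁) • 1), ContinuousLinearMap.ext fun v => ?_⟩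
  obtain ⟨c, hc⟩ : ∃ c : ℂ, P v - φ₀ (P z₁) • v = c • x := by
    refine mem_span_of_forall_functional fun φ hφ => ?_
    have := h𝒩.ext_on_members (F := fun v => φ (P v)) (G := fun v => φ₀ (P z₁) * φ v)
      (by fun_prop) (by fun_prop) (fun K hK hKt z hz => key K hK hKt z hz φ hφ) v
    simp [this]
  have hψc : ψ (P v - φ₀ (P z₁) • v) = c := by simp [hc, hψ]
  have : rankOne x (ψ.comp (P - φ₀ (P z₁) • 1)) v = ψ (P v - φ₀ (P z₁) • v) • x := rfl
  rw [add_apply, this, hψc, ← hc]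
  simp

theorem BracketRule.exists_scalar_add_smul {K N : Submodule ℂ X} (hKN : IsGapPair 𝒩 m K N)
    {x : X} (hx : x ∈ K) (hx0 : x ≠ 0) {f : X →L[ℂ] ℂ} (hf : ∀ v ∈ N, f v = 0) (hf0 : f ≠ 0)
    {E : X →L[ℂ] X} (hE : BracketRule (nestAlgebra 𝒩) L (rankOne x f) E) :
    ∃ s t : ℂ, E - L (rankOne x f) = s • 1 + t • rankOne x f := by
  obtain ⟨s, μ, hμ⟩ := hE.exists_scalar_add_rankOne h𝒩 hrule hKN hx hx0 hf hf0
  obtain ⟨K₁, hK₁, hKt₁, z₁, hz₁, hfz₁⟩ := h𝒩.exists_apply_eq_one hf0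
  have key : ∀ K ∈ 𝒩, K ≠ ⊤ → ∀ z ∈ K, f z = 0 → μ z = 0 := by
    intro K₂ hK₂ hKt₂ z hz hfz
    by_cases hz0 : z = 0
    · simp [hz0]
    obtain ⟨K₃, hK₃, hKt₃, h₁, h₂⟩ := h𝒩.exists_ge hK₁ hKt₁ hK₂ hKt₂
    obtain ⟨K', hK', hKt', h₃, hN⟩ := h𝒩.exists_ge hK₃ hKt₃ hKN.right_mem hKN.ne_top
    obtain ⟨N', hN'⟩ := h𝒩.exists_isGapPair m hK' hKt'
    obtain ⟨k, w, hk, hkw, hfw⟩ :=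
      h𝒩.exists_functional_apply_eq_one hN'.right_mem hN'.ne_top (hN'.le (h₃ (h₁ hz₁))) hfz₁
    have hk0 : k ≠ 0 := by
      rintro rfl
      simp at hkw
    have hzK' : z ∈ K' := h₃ (h₂ hz)
    have hkx : k x = 0 := hk x (hN'.le (hN (hKN.le hx)))
    obtain ⟨C, hC⟩ := hrule K' N' hN' z hzK' k hk
    obtain ⟨s', ν, hν⟩ := hC.exists_scalar_add_rankOne h𝒩 hrule hN' hzK' hz0 hk hk0
    have h := congrArg (fun T : X →L[ℂ] X => T w)
      (hE.swap (hKN.rankOne_mem h𝒩.toIsNest hx hf) hC (hN'.rankOne_mem h𝒩.toIsNest hzK' hk))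
    rw [hμ, hν] at h
    simpa [hkw, hfw, hkx, hfz, hx0, hk z (hN'.le hzK')] using h
  refine ⟨s, μ z₁, ?_⟩
  rw [hμ]
  congr 1
  ext v
  have hv : μ v = μ z₁ * f v := by
    refine h𝒩.ext_on_members (F := fun v => μ v) (G := fun v => μ z₁ * f v)
      (by fun_prop) (by fun_prop) (fun K₂ hK₂ hKt₂ z hz => ?_) v
    obtain ⟨K₃, hK₃, hKt₃, h₁, h₂⟩ := h𝒩.exists_ge hK₁ hKt₁ hK₂ hKt₂
    have := key K₃ hK₃ hKt₃ (z - f z • z₁) (K₃.sub_mem (h₂ hz) (K₃.smul_mem _ (h₁ hz₁)))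
      (by simp [hfz₁])
    simp only [map_sub, map_smul, smul_eq_mul, sub_eq_zero] at this
    simp only [this]
    ring
  simp [hv, mul_smul]

theorem exists_bracketRule_add_smul : ∃ t : ℂ, ∀ K N, IsGapPair 𝒩 m K N → ∀ x ∈ K,
    ∀ f : X →L[ℂ] ℂ, (∀ v ∈ N, f v = 0) →
      BracketRule (nestAlgebra 𝒩) L (rankOne x f) (L (rankOne x f) + t • rankOne x f) := by
  obtain ⟨K₀, hK₀, hKt₀, x₀, hx₀, hx₀0⟩ := h𝒩.exists_ne_zero_member
  obtain ⟨N₀, hKN₀⟩ := h𝒩.exists_isGapPair m hK₀ hKt₀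
  obtain ⟨f₀, hf₀0, hf₀⟩ := h𝒩.exists_ne_zero_functional hKN₀.right_mem hKN₀.ne_top
  obtain ⟨E₀, hE₀⟩ := hrule K₀ N₀ hKN₀ x₀ hx₀ f₀ hf₀
  obtain ⟨s₀, t₀, h₀⟩ := hE₀.exists_scalar_add_smul h𝒩 hrule hKN₀ hx₀ hx₀0 hf₀ hf₀0
  refine ⟨t₀, fun K N hKN x hx f hf => ?_⟩
  by_cases hx0 : x = 0
  · intro c _
    have : rankOne x f = 0 := by
      ext v
      simp [hx0]
    simp [this]
  by_cases hf0 : f = 0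
  · intro c _
    have : rankOne x f = 0 := by
      ext v
      simp [hf0]
    simp [this]
  obtain ⟨E, hE⟩ := hrule K N hKN x hx f hf
  obtain ⟨s, t, h⟩ := hE.exists_scalar_add_smul h𝒩 hrule hKN hx hx0 hf hf0
  obtain ⟨K₁, hK₁, hKt₁, z, hz, hfz, hf₀z⟩ := h𝒩.exists_apply_ne_zero hf0 hf₀0
  obtain ⟨K₂, hK₂, hKt₂, h₁₂, hN₂⟩ := h𝒩.exists_ge hK₁ hKt₁ hKN.right_mem hKN.ne_top
  obtain ⟨K₃, hK₃, hKt₃, h₂₃, hN₀₃⟩ := h𝒩.exists_ge hK₂ hKt₂ hKN₀.right_mem hKN₀.ne_top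
  obtain ⟨N', hN'⟩ := h𝒩.exists_isGapPair m hK₃ hKt₃
  obtain ⟨k, hk0, hk⟩ := h𝒩.exists_ne_zero_functional hN'.right_mem hN'.ne_top
  have hzK : z ∈ K₃ := h₂₃ (h₁₂ hz)
  have hz0 : z ≠ 0 := by
    rintro rfl
    simp at hfz
  obtain ⟨C, hC⟩ := hrule K₃ N' hN' z hzK k hk
  obtain ⟨s', t', h'⟩ := hC.exists_scalar_add_smul h𝒩 hrule hN' hzK hz0 hk hk0
  have ht : t = t₀ :=
    (hE.coeff_eq h𝒩 hKN hN' hx hx0 hzK hf hk hk0 hfz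
      (hk x (hN'.le (h₂₃ (hN₂ (hKN.le hx))))) hC h h').trans
    (hE₀.coeff_eq h𝒩 hKN₀ hN' hx₀ hx₀0 hzK hf₀ hk hk0 hf₀z
      (hk x₀ (hN'.le (hN₀₃ (hKN₀.le hx₀)))) hC h₀ h').symm
  intro c hc
  rw [hE c hc, ← ht]
  rw [sub_eq_iff_eq_add] at h
  rw [h]
  simp only [add_mul, mul_add, smul_mul_assoc, mul_smul_comm, one_mul, mul_one]
  abel

end BracketRule

section Defect

variable {X : Type*} [NormedAddCommGroup X] [NormedSpace ℂ X] {𝒩 : Set (Submodule ℂ X)}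

/-- The failure of the Leibniz rule, `e ↦ M (A e) - A (M e) - (M A) e`. -/
def defect (M : (X →L[ℂ] X) →ₗ[ℂ] (X →L[ℂ] X)) (A : X →L[ℂ] X) :
    (X →L[ℂ] X) →ₗ[ℂ] (X →L[ℂ] X) :=
  M ∘ₗ LinearMap.mulLeft ℂ A - LinearMap.mulLeft ℂ A ∘ₗ M - LinearMap.mulLeft ℂ (M A)

theorem defect_apply (M : (X →L[ℂ] X) →ₗ[ℂ] (X →L[ℂ] X)) (A e : X →L[ℂ] X) :
    defect M A e = M (A * e) - A * M e - M A * e := rfl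

/-- The linear functional `A ↦ φ (defect M A e w)` on `𝒜`. -/
def defectFunctional (𝒜 : Subalgebra ℂ (X →L[ℂ] X)) (M : (X →L[ℂ] X) →ₗ[ℂ] (X →L[ℂ] X))
    (e : X →L[ℂ] X) (φ : X →L[ℂ] ℂ) (w : X) : 𝒜 →ₗ[ℂ] ℂ where
  toFun A := φ (defect M A e w)
  map_add' A B := by
    simp only [defect_apply, Subalgebra.coe_add, add_mul, map_add, add_apply, sub_apply, map_sub]
    ring
  map_smul' c A := by
    simp only [defect_apply, Subalgebra.coe_smul, smul_mul_assoc, map_smul, smul_apply, sub_apply,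
      map_sub, RingHom.id_apply, smul_eq_mul]
    ring

theorem eigenvalue_eq_of_add {V : Type*} [AddCommGroup V] [Module ℂ V] (T : V →ₗ[ℂ] V)
    {e₁ e₂ : V} (h₁ : e₁ ≠ 0) (h₂ : e₂ ≠ 0) {s₁ s₂ s₃ : ℂ} (hs₁ : T e₁ = s₁ • e₁)
    (hs₂ : T e₂ = s₂ • e₂) (hs₃ : T (e₁ + e₂) = s₃ • (e₁ + e₂)) : s₁ = s₂ := by
  have h : (s₁ - s₃) • e₁ = (s₃ - s₂) • e₂ := by
    rw [map_add, hs₁, hs₂] at hs₃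
    rw [← sub_eq_zero] at hs₃ ⊢
    rw [← hs₃]
    module
  by_cases h₁₃ : s₁ = s₃
  · rw [h₁₃, sub_self, zero_smul, eq_comm, smul_eq_zero, or_iff_left h₂, sub_eq_zero] at h
    exact h₁₃.trans h
  · have hne := sub_ne_zero.2 h₁₃
    have he₁ : e₁ = ((s₁ - s₃)⁻¹ * (s₃ - s₂)) • e₂ := by
      rw [mul_smul, ← h, inv_smul_smul₀ hne]
    have : T e₁ = s₂ • e₁ := by
      rw [he₁, map_smul, hs₂, smul_comm]
    rw [hs₁] at this
    exact smul_left_injective ℂ h₁ this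

variable {m : ℕ} {M : (X →L[ℂ] X) →ₗ[ℂ] (X →L[ℂ] X)} (h𝒩 : IsUnboundedNest 𝒩)
  (hM : ∀ K N, IsGapPair 𝒩 m K N → ∀ x ∈ K, ∀ f : X →L[ℂ] ℂ, (∀ v ∈ N, f v = 0) →
    BracketRule (nestAlgebra 𝒩) M (rankOne x f) (M (rankOne x f)))
  (hloc : ∀ K N, IsGapPair 𝒩 m K N → ∀ x ∈ K, ∀ f : X →L[ℂ] ℂ, (∀ v ∈ N, f v = 0) →
    ∀ (φ : X →L[ℂ] ℂ) (w : X), φ x = 0 → f w = 0 → φ (M (rankOne x f) w) = 0)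
include h𝒩 hM hloc

theorem defect_rankOne_apply_eq_zero {A : X →L[ℂ] X} (hA : A ∈ nestAlgebra 𝒩)
    {K N : Submodule ℂ X} (hKN : IsGapPair 𝒩 m K N) {x : X} (hx : x ∈ K) {f : X →L[ℂ] ℂ}
    (hf : ∀ v ∈ N, f v = 0) (hf0 : f ≠ 0) {K₂ : Submodule ℂ X} (hK₂ : K₂ ∈ 𝒩) (hKt₂ : K₂ ≠ ⊤)
    {z : X} (hz : z ∈ K₂) (hfz : f z = 0) : defect M A (rankOne x f) z = 0 := by
  obtain ⟨K₁, hK₁, hKt₁, z₁, hz₁, hfz₁⟩ := h𝒩.exists_apply_eq_one hf0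
  obtain ⟨K₃, hK₃, hKt₃, h₁, h₂⟩ := h𝒩.exists_ge hK₁ hKt₁ hK₂ hKt₂
  obtain ⟨K', hK', hKt', h₃, hN⟩ := h𝒩.exists_ge hK₃ hKt₃ hKN.right_mem hKN.ne_top
  obtain ⟨N', hN'⟩ := h𝒩.exists_isGapPair m hK' hKt'
  obtain ⟨k, w, hk, hkw, hfw⟩ :=
    h𝒩.exists_functional_apply_eq_one hN'.right_mem hN'.ne_top (hN'.le (h₃ (h₁ hz₁))) hfz₁
  have hc : rankOne z k ∈ nestAlgebra 𝒩 := hN'.rankOne_mem h𝒩.toIsNest (h₃ (h₂ hz)) hk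
  have key : ∀ y ∈ K, M (rankOne y f) z = -(f (M (rankOne z k) w)) • y := by
    intro y hy
    have hky : k y = 0 := hk y (hN'.le (hN (hKN.le hy)))
    have hzero : rankOne y f * rankOne z k - rankOne z k * rankOne y f = 0 := by
      ext v
      simp [hfz, hky]
    have h := congrArg (fun T : X →L[ℂ] X => T w) (hM K N hKN y hy f hf _ hc)
    rw [hzero, map_zero] at h
    have hloc' := hloc K N hKN y hy f hf k w hky hfw
    simp [hkw, hfw, hloc'] at h
    rw [neg_smul]
    exact eq_neg_of_add_eq_zero_left h.symm
  rw [defect_apply, mul_rankOne]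
  simp [key x hx, key (A x) (hA K hKN.left_mem x hx), hfz]

theorem exists_defect_rankOne_eq_smul {A : X →L[ℂ] X} (hA : A ∈ nestAlgebra 𝒩)
    {K N : Submodule ℂ X} (hKN : IsGapPair 𝒩 m K N) {x : X} (hx : x ∈ K) {f : X →L[ℂ] ℂ}
    (hf : ∀ v ∈ N, f v = 0) : ∃ s : ℂ, defect M A (rankOne x f) = s • rankOne x f := by
  by_cases hf0 : f = 0
  · have : rankOne x f = 0 := by
      ext v
      simp [hf0]
    exact ⟨0, by simp [this]⟩
  obtain ⟨K₁, hK₁, hKt₁, z₁, hz₁, hfz₁⟩ := h𝒩.exists_apply_eq_one hf0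
  obtain ⟨s, hs⟩ : ∃ s : ℂ, defect M A (rankOne x f) z₁ = s • x := by
    refine mem_span_of_forall_functional fun φ hφ => ?_
    have hb := hM K N hKN x hx f hf A hA
    have hd : defect M A (rankOne x f) =
        M (rankOne x f * A) - M (rankOne x f) * A - rankOne x f * M A := by
      rw [map_sub, ← sub_eq_zero] at hb
      rw [defect_apply, ← sub_eq_zero, ← neg_eq_zero, ← hb]
      abel
    have hfA : ∀ v ∈ N, (f.comp A - f (A z₁) • f) v = 0 := fun v hv => by
      simp [hf v hv, hf _ (hA N hKN.right_mem v hv)]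
    have h₁ := hloc K N hKN x hx _ hfA φ z₁ hφ (by simp [hfz₁])
    have h₂ := hloc K N hKN x hx f hf φ (A z₁ - f (A z₁) • z₁) hφ (by simp [hfz₁])
    have hsub : rankOne x (f.comp A - f (A z₁) • f) =
        rankOne x f * A - f (A z₁) • rankOne x f := by
      ext v
      simp [sub_smul, mul_smul]
    rw [hsub] at h₁
    simp only [map_sub, map_smul, sub_apply, smul_apply, smul_eq_mul] at h₁ h₂
    rw [hd]
    simp only [sub_apply, map_sub, mul_apply_eq_comp, rankOne_apply, map_smul, hφ,
      smul_zero, sub_zero]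
    linear_combination h₁ - h₂
  refine ⟨s, ContinuousLinearMap.ext fun v => ?_⟩
  refine h𝒩.ext_on_members (F := fun v => defect M A (rankOne x f) v)
    (G := fun v => (s • rankOne x f) v) (by fun_prop) (by fun_prop)
    (fun K₂ hK₂ hKt₂ z hz => ?_) v
  obtain ⟨K₃, hK₃, hKt₃, h₁, h₂⟩ := h𝒩.exists_ge hK₁ hKt₁ hK₂ hKt₂
  have := defect_rankOne_apply_eq_zero h𝒩 hM hloc hA hKN hx hf hf0 hK₃ hKt₃
    (K₃.sub_mem (h₂ hz) (K₃.smul_mem (f z) (h₁ hz₁))) (by simp [hfz₁])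
  rw [map_sub, map_smul, hs, sub_eq_zero] at this
  simp [this, smul_comm s]

theorem defect_eigenvalue_eq {A : X →L[ℂ] X} (hA : A ∈ nestAlgebra 𝒩)
    {K₁ N₁ K₂ N₂ : Submodule ℂ X} (h₁ : IsGapPair 𝒩 m K₁ N₁) (h₂ : IsGapPair 𝒩 m K₂ N₂)
    {x₁ x₂ : X} (hx₁ : x₁ ∈ K₁) (hx₂ : x₂ ∈ K₂) (hx₁0 : x₁ ≠ 0) (hx₂0 : x₂ ≠ 0)
    {f₁ f₂ : X →L[ℂ] ℂ} (hf₁ : ∀ v ∈ N₁, f₁ v = 0) (hf₂ : ∀ v ∈ N₂, f₂ v = 0) (hf₁0 : f₁ ≠ 0)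
    (hf₂0 : f₂ ≠ 0) {s₁ s₂ : ℂ} (hs₁ : defect M A (rankOne x₁ f₁) = s₁ • rankOne x₁ f₁)
    (hs₂ : defect M A (rankOne x₂ f₂) = s₂ • rankOne x₂ f₂) : s₁ = s₂ := by
  obtain ⟨K, hK, hKt, hN₁, hN₂⟩ := h𝒩.exists_ge h₁.right_mem h₁.ne_top h₂.right_mem h₂.ne_top
  obtain ⟨N, hKN⟩ := h𝒩.exists_isGapPair m hK hKt
  obtain ⟨k, hk0, hk⟩ := h𝒩.exists_ne_zero_functional hKN.right_mem hKN.ne_top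
  have addR : ∀ (x : X) (f g : X →L[ℂ] ℂ), rankOne x f + rankOne x g = rankOne x (f + g) :=
    fun x f g => by
      ext v
      simp [add_smul]
  have addL : ∀ (x y : X) (f : X →L[ℂ] ℂ), rankOne x f + rankOne y f = rankOne (x + y) f :=
    fun x y f => by
      ext v
      simp
  have step : ∀ K' N', IsGapPair 𝒩 m K' N' → N' ≤ K → ∀ x ∈ K', x ≠ 0 → ∀ f : X →L[ℂ] ℂ,
      (∀ v ∈ N', f v = 0) → f ≠ 0 → ∀ s t : ℂ, defect M A (rankOne x f) = s • rankOne x f →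
      defect M A (rankOne x k) = t • rankOne x k → s = t := by
    intro K' N' h' hle x hx hx0 f hf hf0 s t hs ht
    obtain ⟨r, hr⟩ := exists_defect_rankOne_eq_smul h𝒩 hM hloc hA h' hx (f := f + k)
      fun v hv => by simp [hf v hv, hk v (hKN.le (hle hv))]
    rw [← addR] at hr
    exact eigenvalue_eq_of_add _ (rankOne_ne_zero hx0 hf0) (rankOne_ne_zero hx0 hk0) hs ht hr
  have hxK₁ : x₁ ∈ K := hN₁ (h₁.le hx₁)
  have hxK₂ : x₂ ∈ K := hN₂ (h₂.le hx₂)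
  obtain ⟨t₁, ht₁⟩ := exists_defect_rankOne_eq_smul h𝒩 hM hloc hA hKN hxK₁ hk
  obtain ⟨t₂, ht₂⟩ := exists_defect_rankOne_eq_smul h𝒩 hM hloc hA hKN hxK₂ hk
  obtain ⟨r, hr⟩ := exists_defect_rankOne_eq_smul h𝒩 hM hloc hA hKN (K.add_mem hxK₁ hxK₂) hk
  rw [← addL] at hr
  rw [step K₁ N₁ h₁ hN₁ x₁ hx₁ hx₁0 f₁ hf₁ hf₁0 s₁ t₁ hs₁ ht₁,
    step K₂ N₂ h₂ hN₂ x₂ hx₂ hx₂0 f₂ hf₂ hf₂0 s₂ t₂ hs₂ ht₂]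
  exact eigenvalue_eq_of_add _ (rankOne_ne_zero hx₁0 hk0) (rankOne_ne_zero hx₂0 hk0) ht₁ ht₂ hr

theorem isDerivOn_add_defectFunctional {K₀ N₀ : Submodule ℂ X} (h₀ : IsGapPair 𝒩 m K₀ N₀)
    {x₀ : X} (hx₀ : x₀ ∈ K₀) {f₀ : X →L[ℂ] ℂ} (hf₀ : ∀ v ∈ N₀, f₀ v = 0) {φ : X →L[ℂ] ℂ} {w : X}
    (hφ : φ x₀ = 1) (hw : f₀ w = 1) :
    IsDerivOn (nestAlgebra 𝒩) (M ∘ₗ (nestAlgebra 𝒩).val.toLinearMap +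
      (defectFunctional (nestAlgebra 𝒩) M (rankOne x₀ f₀) φ w).smulRight 1) := by
  set σ := defectFunctional (nestAlgebra 𝒩) M (rankOne x₀ f₀) φ w with hσ
  set D := M ∘ₗ (nestAlgebra 𝒩).val.toLinearMap + σ.smulRight 1 with hD
  have hx₀0 : x₀ ≠ 0 := by
    rintro rfl
    simp at hφ
  have hf₀0 : f₀ ≠ 0 := by
    rintro rfl
    simp at hw
  have hDA : ∀ A : nestAlgebra 𝒩, D A = M A + σ A • 1 := fun A => rfl
  have key : ∀ A : nestAlgebra 𝒩, ∀ K N, IsGapPair 𝒩 m K N → ∀ x ∈ K, ∀ f : X →L[ℂ] ℂ,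
      (∀ v ∈ N, f v = 0) → f ≠ 0 →
      D A * rankOne x f = M (A * rankOne x f) - A * M (rankOne x f) := by
    intro A K N hKN x hx f hf hf0
    by_cases hx0 : x = 0
    · have : rankOne x f = 0 := by
        ext v
        simp [hx0]
      simp [this]
    obtain ⟨s₀, hs₀⟩ := exists_defect_rankOne_eq_smul h𝒩 hM hloc A.2 h₀ hx₀ hf₀
    obtain ⟨s, hs⟩ := exists_defect_rankOne_eq_smul h𝒩 hM hloc A.2 hKN hx hf
    have hσA : σ A = s := by
      have : σ A = φ (defect M A (rankOne x₀ f₀) w) := rfl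
      rw [this, hs₀, ← defect_eigenvalue_eq h𝒩 hM hloc A.2 h₀ hKN hx₀ hx hx₀0 hx0 hf₀ hf hf₀0 hf0
        hs₀ hs]
      simp [hφ, hw]
    rw [defect_apply, sub_eq_iff_eq_add] at hs
    rw [hDA, hσA, hs, add_mul, smul_mul_assoc, one_mul, add_comm]
  intro A B
  refine ContinuousLinearMap.ext (h𝒩.ext_on_members (by fun_prop) (by fun_prop) ?_)
  intro K hK hKt v hv
  obtain ⟨N, hKN⟩ := h𝒩.exists_isGapPair m hK hKt
  obtain ⟨f, hf0, hf⟩ := h𝒩.exists_ne_zero_functional hKN.right_mem hKN.ne_top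
  obtain ⟨-, -, -, u, -, hu⟩ := h𝒩.exists_apply_eq_one hf0
  have hB := key A K N hKN (B.1 v) (B.2 K hK v hv) f hf hf0
  have h : D (A * B) * rankOne v f = (D A * B + A * D B) * rankOne v f := by
    rw [add_mul, mul_assoc, mul_rankOne (B : X →L[ℂ] X), hB, mul_assoc,
      key B K N hKN v hv f hf hf0, key (A * B) K N hKN v hv f hf hf0, mul_sub,
      Subalgebra.coe_mul, mul_assoc, mul_rankOne (B : X →L[ℂ] X)]
    noncomm_ring
  simpa [hu] using congrArg (fun T : X →L[ℂ] X => T u) h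

end Defect

section LieNDeriv

variable {X : Type*} [NormedAddCommGroup X] [NormedSpace ℂ X] {𝒩 : Set (Submodule ℂ X)}

theorem BracketRule.add_smul_id {𝒜 : Subalgebra ℂ (X →L[ℂ] X)}
    {L : (X →L[ℂ] X) →ₗ[ℂ] (X →L[ℂ] X)} {e : X →L[ℂ] X} {t : ℂ}
    (h : BracketRule 𝒜 L e (L e + t • e)) :
    BracketRule 𝒜 (L + t • LinearMap.id) e ((L + t • LinearMap.id : _ →ₗ[ℂ] _) e) := by
  intro c hc
  simp only [LinearMap.add_apply, LinearMap.smul_apply, LinearMap.id_apply, h c hc]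
  simp only [add_mul, mul_add, smul_mul_assoc, mul_smul_comm, smul_sub]
  abel

theorem IsLieNDeriv.exists_isDerivOn_add_scalar (h𝒩 : IsUnboundedNest 𝒩) (m : ℕ)
    (L : ↥(nestAlgebra 𝒩) →ₗ[ℂ] (X →L[ℂ] X)) (hL : IsLieNDeriv (nestAlgebra 𝒩) (m + 2) L) :
    ∃ (D : ↥(nestAlgebra 𝒩) →ₗ[ℂ] (X →L[ℂ] X)) (τ : ↥(nestAlgebra 𝒩) →ₗ[ℂ] ℂ),
      IsDerivOn (nestAlgebra 𝒩) D ∧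
      (∀ a : Fin (m + 2) → ↥(nestAlgebra 𝒩), τ (commPoly (m + 2) a) = 0) ∧
      L = D + τ.smulRight 1 ∧ (Continuous L → Continuous τ) := by
  obtain ⟨L', hL'⟩ := LinearMap.exists_extend (p := (nestAlgebra 𝒩).toSubmodule) L
  have hLL' : ∀ a : nestAlgebra 𝒩, L' a = L a := fun a => LinearMap.congr_fun hL' a
  have hpoly : ∀ a : Fin (m + 2) → X →L[ℂ] X, (∀ i, a i ∈ nestAlgebra 𝒩) →
      L' (commPoly (m + 2) a) = commPolySum (m + 2) a (fun i => L' (a i)) := by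
    intro a ha
    have h := hL fun i => ⟨a i, ha i⟩
    rw [← hLL', coe_commPoly] at h
    simp only [← hLL'] at h
    exact h
  have hrule : ∀ K N, IsGapPair 𝒩 (m + 1) K N → ∀ x ∈ K, ∀ f : X →L[ℂ] ℂ, (∀ v ∈ N, f v = 0) →
      ∃ E, BracketRule (nestAlgebra 𝒩) L' (rankOne x f) E := by
    intro K N hKN x hx f hf
    obtain ⟨a, ha, -, h⟩ := exists_commPoly_eq_rankOne h𝒩.toIsNest hKN.right_mem hKN.of_succ.gap
      hx hf (φ := 0) (w := 0) rfl (map_zero f)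
    exact ⟨_, h ▸ bracketRule_commPoly hpoly a ha⟩
  obtain ⟨t, ht⟩ := exists_bracketRule_add_smul h𝒩 hrule
  set M := L' + t • LinearMap.id with hMdef
  have hM : ∀ K N, IsGapPair 𝒩 (m + 1) K N → ∀ x ∈ K, ∀ f : X →L[ℂ] ℂ, (∀ v ∈ N, f v = 0) →
      BracketRule (nestAlgebra 𝒩) M (rankOne x f) (M (rankOne x f)) :=
    fun K N hKN x hx f hf => (ht K N hKN x hx f hf).add_smul_id
  have hloc : ∀ K N, IsGapPair 𝒩 (m + 1) K N → ∀ x ∈ K, ∀ f : X →L[ℂ] ℂ, (∀ v ∈ N, f v = 0) →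
      ∀ (φ : X →L[ℂ] ℂ) (w : X), φ x = 0 → f w = 0 → φ (M (rankOne x f) w) = 0 := by
    intro K N hKN x hx f hf φ w hφ hw
    obtain ⟨a, ha, hann, h⟩ := exists_commPoly_eq_rankOne h𝒩.toIsNest hKN.right_mem hKN.gap
      hx hf hφ hw
    have h' : φ (L' (rankOne x f) w) = 0 := by
      rw [← h, hpoly a ha]
      exact commPolySum_annihilates m a _ hann
    simp [hMdef, h', hw]
  obtain ⟨K₀, hK₀, hKt₀, x₀, hx₀, hx₀0⟩ := h𝒩.exists_ne_zero_member
  obtain ⟨N₀, hKN₀⟩ := h𝒩.exists_isGapPair (m + 1) hK₀ hKt₀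
  obtain ⟨f₀, hf₀0, hf₀⟩ := h𝒩.exists_ne_zero_functional hKN₀.right_mem hKN₀.ne_top
  obtain ⟨φ, hφ⟩ := SeparatingDual.exists_eq_one (R := ℂ) hx₀0
  obtain ⟨-, -, -, w, -, hw⟩ := h𝒩.exists_apply_eq_one hf₀0
  have hD := isDerivOn_add_defectFunctional h𝒩 hM hloc hKN₀ hx₀ hf₀ hφ hw
  set σ := defectFunctional (nestAlgebra 𝒩) M (rankOne x₀ f₀) φ w with hσ
  set D := M ∘ₗ (nestAlgebra 𝒩).val.toLinearMap + σ.smulRight 1 with hDdef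
  have hDA : ∀ A : nestAlgebra 𝒩, D A = L A + t • (A : X →L[ℂ] X) + σ A • 1 := fun A => by
    rw [← hLL']
    rfl
  have hsum : ∀ a : Fin (m + 2) → nestAlgebra 𝒩,
      (((m : ℂ) + 1) * t) • commPoly (m + 2) (fun i => (a i : X →L[ℂ] X)) =
        σ (commPoly (m + 2) a) • 1 := by
    intro a
    have h₁ := hD.map_commPoly (m + 2) a
    simp only [hDA] at h₁
    rw [commPolySum_add, commPolySum_add, commPolySum_scalar, commPolySum_smul_self,
      show L (commPoly (m + 2) a) = commPolySum (m + 2) (fun i => (a i : X →L[ℂ] X))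
        (fun i => L (a i)) from hL a, coe_commPoly] at h₁
    rw [← sub_eq_zero] at h₁ ⊢
    rw [← neg_eq_zero, ← h₁]
    push_cast
    module
  have hnice : ∃ a : Fin (m + 2) → nestAlgebra 𝒩,
      commPoly (m + 2) (fun i => (a i : X →L[ℂ] X)) = rankOne x₀ f₀ := by
    obtain ⟨a, ha, -, h⟩ := exists_commPoly_eq_rankOne h𝒩.toIsNest hKN₀.right_mem hKN₀.gap
      hx₀ hf₀ (φ := 0) (w := 0) rfl (map_zero f₀)
    exact ⟨fun i => ⟨a i, ha i⟩, h⟩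
  have ht0 : t = 0 := by
    obtain ⟨a, ha⟩ := hnice
    have h := hsum a
    rw [ha] at h
    have h₁ : σ (commPoly (m + 2) a) = 0 := by
      have := congrArg (fun T : X →L[ℂ] X => T x₀) h.symm
      simpa [hf₀ x₀ (hKN₀.le hx₀), hx₀0] using this
    rw [h₁, zero_smul, smul_eq_zero, or_iff_left (rankOne_ne_zero hx₀0 hf₀0), mul_eq_zero] at h
    exact h.resolve_left (by exact_mod_cast m.succ_ne_zero)
  refine ⟨D, -σ, hD, fun a => ?_, ?_, fun hcont => ?_⟩
  · have h := congrArg (fun T : X →L[ℂ] X => T x₀) (hsum a).symm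
    simpa [ht0, hx₀0] using h
  · ext1 A
    simp [hDA, ht0]
  · have he₀ := hKN₀.rankOne_mem h𝒩.toIsNest hx₀ hf₀
    have hfun : ∀ A : nestAlgebra 𝒩, (-σ) A = -φ ((L (A * ⟨_, he₀⟩) -
        A * L ⟨_, he₀⟩ - L A * rankOne x₀ f₀) w) := fun A => by
      rw [← hLL', ← hLL', ← hLL']
      simp [hσ, defectFunctional, defect_apply, hMdef, ht0]
    rw [show ⇑(-σ) = _ from funext hfun]
    fun_prop

end LieNDeriv

/-- (Theorem 3.22 of the paper.)  Let `X` be a complex Banach space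
and `𝒩` a non-trivial nest on `X` with `X₋^⊥ = {0}` (i.e. `dim X₋^⊥ = 0`).  Then every
Lie `n`-derivation `L : Alg 𝒩 → B(X)` (`n ≥ 2`) decomposes as `L = D + H` with `D` a
derivation and `H` a linear map into `ℂ I` vanishing on all `(n-1)`-th commutators;
moreover, if `L` is continuous then `D, H` can be chosen continuous. -/
theorem statement19 {X : Type*} [NormedAddCommGroup X] [NormedSpace ℂ X] [CompleteSpace X]
    (𝒩 : Set (Submodule ℂ X)) (hnest : IsNest 𝒩)
    (hnontrivial : 𝒩 ≠ ({⊥, ⊤} : Set (Submodule ℂ X)))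
    (hann : annihilatorOf (nestXminus 𝒩) = ⊥)
    (n : ℕ) (hn : 2 ≤ n)
    (L : ↥(nestAlgebra 𝒩) →ₗ[ℂ] (X →L[ℂ] X))
    (hL : IsLieNDeriv (nestAlgebra 𝒩) n L) :
    (∃ D H : ↥(nestAlgebra 𝒩) →ₗ[ℂ] (X →L[ℂ] X),
        IsDerivOn (nestAlgebra 𝒩) D ∧
        (∀ a : ↥(nestAlgebra 𝒩), ∃ c : ℂ, H a = c • (1 : X →L[ℂ] X)) ∧
        (∀ a : Fin n → ↥(nestAlgebra 𝒩), H (commPoly n a) = 0) ∧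
        L = D + H) ∧
    (Continuous L →
      ∃ D H : ↥(nestAlgebra 𝒩) →ₗ[ℂ] (X →L[ℂ] X),
        IsDerivOn (nestAlgebra 𝒩) D ∧
        (∀ a : ↥(nestAlgebra 𝒩), ∃ c : ℂ, H a = c • (1 : X →L[ℂ] X)) ∧
        (∀ a : Fin n → ↥(nestAlgebra 𝒩), H (commPoly n a) = 0) ∧
        L = D + H ∧ Continuous D ∧ Continuous H) := by
  obtain ⟨m, rfl⟩ := Nat.exists_eq_add_of_le' hn
  obtain ⟨D, τ, hD, hτ, hLD, hcont⟩ :=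
    hL.exists_isDerivOn_add_scalar (hnest.isUnboundedNest hnontrivial hann)
  have hτ' : ∀ a : Fin (m + 2) → ↥(nestAlgebra 𝒩),
      τ.smulRight (1 : X →L[ℂ] X) (commPoly (m + 2) a) = 0 := fun a => by
    rw [LinearMap.smulRight_apply, hτ, zero_smul]
  refine ⟨⟨D, τ.smulRight 1, hD, fun a => ⟨τ a, rfl⟩, hτ', hLD⟩, fun hLc =>
    ⟨D, τ.smulRight 1, hD, fun a => ⟨τ a, rfl⟩, hτ', hLD, ?_, ?_⟩⟩
  · rw [eq_sub_of_add_eq hLD.symm]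
    exact hLc.sub ((hcont hLc).smul continuous_const)
  · exact (hcont hLc).smul continuous_const
end
end
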